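/- arXiv:1608.04114 — 3 statements merged into one kernel-verified Lean document; each statement's English description precedes it below -/
import Mathlib

section
/- Let α, β > -1, s ∈ ℕ, θ ∈ [-1,1], and let λ_0,…,λ_{s-1} be positive constants. Then the polynomials 𝒥_{n,θ}^{α-s,β-s}, n ≥ 0, are mutually orthogonal with respect to the Sobolev inner product ⟨·,·⟩_{α,β}^{-s}, and their norms are given by ⟨𝒥_{n,θ}^{α-s,β-s}, 𝒥_{n,θ}^{α-s,β-s}⟩_{α,β}^{-s} = λ_n for 0 ≤ n ≤ s-1 and = h_{n-s}^{α,β} for n ≥ s. -/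
open MeasureTheory Set ENNReal NNReal

noncomputable section

namespace JacobiApprox

/-- The Jacobi weight `w_{α,β}(x) = (1-x)^α (1+x)^β` on `(-1,1)`. -/
def w (α β x : ℝ) : ℝ := (1 - x) ^ α * (1 + x) ^ β

/-- The weighted `L^p` norm `‖f‖_{L^p(w_{α,β})}`; for `p = ∞` it is the uniform
norm on `[-1,1]`. -/
def LpW (α β : ℝ) (p : ℝ≥0∞) (f : ℝ → ℝ) : ℝ :=
  if p = ⊤ then sSup ((fun x => |f x|) '' Icc (-1 : ℝ) 1)
  else (∫ x in Ioo (-1 : ℝ) 1, |f x| ^ p.toReal * w α β x) ^ (1 / p.toReal)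

/-- Membership in `L^p(w_{α,β})` (`f ∈ C[-1,1]` when `p = ∞`). -/
def MemLpW (α β : ℝ) (p : ℝ≥0∞) (f : ℝ → ℝ) : Prop :=
  Measurable f ∧
    (p ≠ ⊤ → IntegrableOn (fun x => |f x| ^ p.toReal * w α β x) (Ioo (-1 : ℝ) 1)) ∧
    (p = ⊤ → ContinuousOn f (Icc (-1 : ℝ) 1))

/-- `E_n(f)_{L^p(w_{α,β})}`: the error of best approximation of `f` by polynomials
of degree at most `n` in `L^p(w_{α,β})`. -/
def E (α β : ℝ) (p : ℝ≥0∞) (n : ℕ) (f : ℝ → ℝ) : ℝ :=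
  sInf {r : ℝ | ∃ q : Polynomial ℝ, q.natDegree ≤ n ∧
    r = LpW α β p (fun x => f x - q.eval x)}

/-- Membership in the Sobolev space `W_p^s(w_{α,β})`: `f` has `s` continuous
derivatives and `f^{(s)} ∈ L^p(w_{α,β})` (for `p = ∞` this is `f ∈ C^s[-1,1]`). -/
def MemW (α β : ℝ) (p : ℝ≥0∞) (s : ℕ) (f : ℝ → ℝ) : Prop :=
  ContDiff ℝ (s : ℕ∞) f ∧
    (p ≠ ⊤ → IntegrableOn (fun x => |iteratedDeriv s f x| ^ p.toReal * w α β x)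
      (Ioo (-1 : ℝ) 1))

/-- The Sobolev norm `‖f‖_{W_p^s(w_{α,β})}` (max over derivatives when `p = ∞`). -/
def WNorm (α β : ℝ) (p : ℝ≥0∞) (s : ℕ) (f : ℝ → ℝ) : ℝ :=
  if p = ⊤ then
    (Finset.range (s + 1)).sup' (Finset.nonempty_range_iff.mpr (Nat.succ_ne_zero s))
      (fun k => LpW α β ⊤ (iteratedDeriv k f))
  else (∑ k ∈ Finset.range (s + 1), (LpW α β p (iteratedDeriv k f)) ^ p.toReal) ^
    (1 / p.toReal)

/-- Pochhammer symbol (rising factorial) `(a)_k`. -/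
def poch (a : ℝ) (k : ℕ) : ℝ := ∏ i ∈ Finset.range k, (a + i)

/-- The Jacobi polynomial `P_n^{(α,β)}`. -/
def JP (α β : ℝ) (n : ℕ) (t : ℝ) : ℝ :=
  (poch (α + 1) n / n.factorial) *
    ∑ k ∈ Finset.range (n + 1),
      poch (-(n : ℝ)) k * poch ((n : ℝ) + α + β + 1) k /
        (poch (α + 1) k * k.factorial) * ((1 - t) / 2) ^ k

/-- The renormalized Jacobi polynomial `J_n^{α,β} = 2^n/(n+α+β+1)_n · P_n^{(α,β)}`. -/
def J (α β : ℝ) (n : ℕ) (t : ℝ) : ℝ :=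
  2 ^ n / poch ((n : ℝ) + α + β + 1) n * JP α β n t

/-- The inner product `⟨f,g⟩_{α,β} = ∫_{-1}^1 f g w_{α,β}`. -/
def ip (α β : ℝ) (f g : ℝ → ℝ) : ℝ := ∫ x in Ioo (-1 : ℝ) 1, f x * g x * w α β x

/-- `h_n^{α,β} = ⟨J_n^{α,β}, J_n^{α,β}⟩_{α,β}`. -/
def hJ (α β : ℝ) (n : ℕ) : ℝ := ip α β (J α β n) (J α β n)

/-- The Fourier–Jacobi coefficient `\hat f_n^{α,β}`. -/
def coeff (α β : ℝ) (n : ℕ) (f : ℝ → ℝ) : ℝ := ip α β f (J α β n) / hJ α β n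

/-- The `n`-th partial sum `S_n^{α,β} f` of the Fourier–Jacobi series. -/
def S (α β : ℝ) (n : ℕ) (f : ℝ → ℝ) (x : ℝ) : ℝ :=
  ∑ k ∈ Finset.range (n + 1), coeff α β k f * J α β k x

/-- An admissible cut-off function: `C^∞`, `η ≡ 1` on `[0,1]`, `η ≡ 0` on `[2,∞)`. -/
def Admissible (η : ℝ → ℝ) : Prop :=
  ContDiff ℝ (⊤ : ℕ∞) η ∧ (∀ t : ℝ, 0 ≤ t → t ≤ 1 → η t = 1) ∧ ∀ t : ℝ, 2 ≤ t → η t = 0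

/-- The de la Vallée Poussin type operator `V_n^{α,β} f`. -/
def V (η : ℝ → ℝ) (α β : ℝ) (n : ℕ) (f : ℝ → ℝ) (x : ℝ) : ℝ :=
  ∑ k ∈ Finset.range (2 * n + 1), η ((k : ℝ) / (n : ℝ)) * coeff α β k f * J α β k x

/-- The Sobolev orthogonal polynomial `𝒥_{n,θ}^{α-s,β-s}`. -/
def SJ (α β : ℝ) (s : ℕ) (θ : ℝ) (n : ℕ) (x : ℝ) : ℝ :=
  if n < s then (x - θ) ^ n / n.factorial
  else ∫ t in θ..x, (x - t) ^ (s - 1) / (s - 1).factorial * J α β (n - s) t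

/-- The Sobolev inner product `⟨f,g⟩_{α,β}^{-s}`. -/
def ipS (α β : ℝ) (s : ℕ) (θ : ℝ) (lam : ℕ → ℝ) (f g : ℝ → ℝ) : ℝ :=
  ip α β (iteratedDeriv s f) (iteratedDeriv s g) +
    ∑ k ∈ Finset.range s, lam k * iteratedDeriv k f θ * iteratedDeriv k g θ

/-- The Fourier coefficient `\hat{𝔣}_n^{α-s,β-s}` in the Sobolev orthogonal system. -/
def coeffS (α β : ℝ) (s : ℕ) (θ : ℝ) (lam : ℕ → ℝ) (n : ℕ) (f : ℝ → ℝ) : ℝ :=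
  ipS α β s θ lam f (SJ α β s θ n) / ipS α β s θ lam (SJ α β s θ n) (SJ α β s θ n)

/-- The `n`-th partial sum `𝒮_{n,θ}^{α-s,β-s} f` of the Sobolev orthogonal expansion. -/
def SS (α β : ℝ) (s : ℕ) (θ : ℝ) (lam : ℕ → ℝ) (n : ℕ) (f : ℝ → ℝ) (x : ℝ) : ℝ :=
  ∑ k ∈ Finset.range (n + 1), coeffS α β s θ lam k f * SJ α β s θ k x

/-- The operator `𝒱_{n,θ}^{α-s,β-s} f`. -/
def VS (η : ℝ → ℝ) (α β : ℝ) (s : ℕ) (θ : ℝ) (n : ℕ) (f : ℝ → ℝ) (x : ℝ) : ℝ :=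
  (∑ k ∈ Finset.range s, iteratedDeriv k f θ * (x - θ) ^ k / k.factorial) +
    ∫ t in θ..x, (x - t) ^ (s - 1) / (s - 1).factorial *
      V η α β n (iteratedDeriv s f) t

/-- `A_j^{α,β} = (α+β+2)_{2j}/(α+1)_j`. -/
def Acoef (α β : ℝ) (j : ℕ) : ℝ := poch (α + β + 2) (2 * j) / poch (α + 1) j

/-- `B_n^{α,β} = (α+1)_{n+1}/(α+β+2)_{2n+1}`. -/
def Bcoef (α β : ℝ) (n : ℕ) : ℝ := poch (α + 1) (n + 1) / poch (α + β + 2) (2 * n + 1)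

/-- `D_j^{α,β} = (j+β+1)/((2j+α+β+2)(2j+α+β+3))`. -/
def Dcoef (α β : ℝ) (j : ℕ) : ℝ :=
  ((j : ℝ) + β + 1) / ((2 * (j : ℝ) + α + β + 2) * (2 * (j : ℝ) + α + β + 3))

/-- The function `u_{g,k}` of the Aubin–Nitsche duality argument. -/
def u (α β : ℝ) (s k : ℕ) (g : ℝ → ℝ) (x : ℝ) : ℝ :=
  ∫ t in (-1 : ℝ)..x, (x - t) ^ (s - 1) / (s - 1).factorial * (1 / w α β t) *
    ∫ y in t..(1 : ℝ), (y - t) ^ (s - k - 1) / (s - k - 1).factorial * g y * w α β y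

/-- The `s`-th derivative of `u_{g,k}`, given by its explicit formula. -/
def uDs (α β : ℝ) (s k : ℕ) (g : ℝ → ℝ) (x : ℝ) : ℝ :=
  (1 / w α β x) *
    ∫ y in x..(1 : ℝ), (y - x) ^ (s - k - 1) / (s - k - 1).factorial * g y * w α β y

/-!
Each of the polynomials `𝒥_n` represents a simple functional for the Sobolev form. If `n < s`, the
Taylor monomial `(x - θ)^n / n!` has zero `s`-th derivative and its derivatives at `θ` are `δ_{kn}`,
so `⟨𝒥_n, g⟩ = λ_n g^{(n)}(θ)`. If `n ≥ s`, then by Cauchy's formula for repeated integration `𝒥_n`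
is the `s`-fold primitive of `J_{n-s}` based at `θ`, so `⟨𝒥_n, g⟩ = ⟨J_{n-s}, g^{(s)}⟩`. There
remains the orthogonality of the Jacobi polynomials: they are eigenfunctions, with distinct
eigenvalues, of a differential operator that is symmetric for the weight `w_{α,β}`.
-/

section JacobiWeight

variable {α β : ℝ}

lemma intervalIntegrable_w (hα : -1 < α) (hβ : -1 < β) :
    IntervalIntegrable (w α β) volume (-1) 1 := by
  have left_half : IntervalIntegrable (w α β) volume (-1) 0 := by
    have h : IntervalIntegrable (fun x : ℝ ↦ (1 + x) ^ β) volume (-1) 0 := by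
      simpa using (intervalIntegral.intervalIntegrable_rpow' (a := 0) (b := 1) hβ).comp_add_left 1
    refine h.continuousOn_mul (ContinuousOn.rpow_const (by fun_prop) fun x hx ↦ Or.inl ?_)
    rw [uIcc_of_le (by norm_num)] at hx
    linarith [hx.2]
  have right_half : IntervalIntegrable (w α β) volume 0 1 := by
    have h : IntervalIntegrable (fun x : ℝ ↦ (1 - x) ^ α) volume 0 1 := by
      simpa using
        (intervalIntegral.intervalIntegrable_rpow' (a := 0) (b := 1) hα).comp_sub_left 1 |>.symm
    refine h.mul_continuousOn (ContinuousOn.rpow_const (by fun_prop) fun x hx ↦ Or.inl ?_)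
    rw [uIcc_of_le (by norm_num)] at hx
    linarith [hx.1]
  exact left_half.trans right_half

lemma continuous_w (hα : 0 ≤ α) (hβ : 0 ≤ β) : Continuous (w α β) :=
  (Continuous.rpow_const (by fun_prop) fun _ ↦ Or.inr hα).mul
    (Continuous.rpow_const (by fun_prop) fun _ ↦ Or.inr hβ)

lemma w_one (hα : α ≠ 0) : w α β 1 = 0 := by
  simp [w, Real.zero_rpow hα]

lemma w_neg_one (hβ : β ≠ 0) : w α β (-1) = 0 := by
  simp [w, Real.zero_rpow hβ]

lemma w_add_one_add_one {x : ℝ} (hx : x ∈ Ioo (-1 : ℝ) 1) :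
    w (α + 1) (β + 1) x = (1 - x ^ 2) * w α β x := by
  have h₁ : 1 - x ≠ 0 := by linarith [hx.2]
  have h₂ : 1 + x ≠ 0 := by linarith [hx.1]
  rw [w, w, Real.rpow_add_one h₁, Real.rpow_add_one h₂]
  ring

/-- Pearson's equation. It makes `w_{α,β}` times the Jacobi operator applied to `f` the derivative
of `w_{α+1,β+1} f'`, whence the symmetry of that operator. -/
lemma hasDerivAt_w_add_one_add_one {x : ℝ} (hx : x ∈ Ioo (-1 : ℝ) 1) :
    HasDerivAt (w (α + 1) (β + 1)) ((β - α - (α + β + 2) * x) * w α β x) x := by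
  have h₁ : 1 - x ≠ 0 := by linarith [hx.2]
  have h₂ : 1 + x ≠ 0 := by linarith [hx.1]
  have hsub := ((hasDerivAt_id x).const_sub 1).rpow_const (p := α + 1) (Or.inl h₁)
  have hadd := ((hasDerivAt_id x).const_add 1).rpow_const (p := β + 1) (Or.inl h₂)
  refine (hsub.mul hadd).congr_deriv ?_
  simp only [id, add_sub_cancel_right, Real.rpow_add_one h₁, Real.rpow_add_one h₂, w]
  ring

lemma ip_eq_intervalIntegral (α β : ℝ) (f g : ℝ → ℝ) :
    ip α β f g = ∫ x in (-1 : ℝ)..1, f x * g x * w α β x := by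
  rw [ip, intervalIntegral.integral_of_le (by norm_num), integral_Ioc_eq_integral_Ioo]

lemma ip_comm (α β : ℝ) (f g : ℝ → ℝ) : ip α β f g = ip α β g f := by
  simp only [ip, mul_comm (f _)]

lemma ip_smul_left (α β c : ℝ) (f g : ℝ → ℝ) : ip α β (c • f) g = c * ip α β f g := by
  simp only [ip, Pi.smul_apply, smul_eq_mul, mul_assoc, integral_const_mul]

lemma ip_zero_left (α β : ℝ) (g : ℝ → ℝ) : ip α β 0 g = 0 := by
  simp [ip]

lemma intervalIntegrable_mul_mul_w (hα : -1 < α) (hβ : -1 < β) {f g : ℝ → ℝ} (hf : Continuous f)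
    (hg : Continuous g) : IntervalIntegrable (fun x ↦ f x * g x * w α β x) volume (-1) 1 :=
  (intervalIntegrable_w hα hβ).continuousOn_mul (hf.mul hg).continuousOn

end JacobiWeight

section JacobiOperator

/-- The Jacobi differential operator `(1 - x²) f'' + (β - α - (α + β + 2) x) f'`, whose polynomial
eigenfunctions are the Jacobi polynomials. -/
def jacobiOperator (α β : ℝ) (f : ℝ → ℝ) (x : ℝ) : ℝ :=
  (1 - x ^ 2) * deriv (deriv f) x + (β - α - (α + β + 2) * x) * deriv f x

variable {α β : ℝ} {f g : ℝ → ℝ}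

lemma hasDerivAt_w_mul_deriv_mul (hf : ContDiff ℝ 2 f) (hg : ContDiff ℝ 1 g) {x : ℝ}
    (hx : x ∈ Ioo (-1 : ℝ) 1) :
    HasDerivAt (fun x ↦ w (α + 1) (β + 1) x * deriv f x * g x)
      (jacobiOperator α β f x * g x * w α β x + deriv f x * deriv g x * w (α + 1) (β + 1) x)
      x := by
  have hf' : HasDerivAt (deriv f) (deriv (deriv f) x) x :=
    (hf.differentiable_deriv_two x).hasDerivAt
  have hg' : HasDerivAt g (deriv g x) x := (hg.differentiable_one x).hasDerivAt
  refine (((hasDerivAt_w_add_one_add_one hx).mul hf').mul hg').congr_deriv ?_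
  simp only [Pi.mul_apply, jacobiOperator, w_add_one_add_one hx]
  ring

lemma ip_jacobiOperator_left (hα : -1 < α) (hβ : -1 < β) (hf : ContDiff ℝ 2 f)
    (hg : ContDiff ℝ 1 g) :
    ip α β (jacobiOperator α β f) g = -ip (α + 1) (β + 1) (deriv f) (deriv g) := by
  have hf' : Continuous (deriv f) := hf.continuous_deriv one_le_two
  have hLf : Continuous (jacobiOperator α β f) := by
    have : Continuous (deriv (deriv f)) :=
      (ContDiff.deriv' (n := 1) hf).continuous_deriv_one
    unfold jacobiOperator
    fun_prop
  have hcont : Continuous fun x ↦ w (α + 1) (β + 1) x * deriv f x * g x :=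
    ((continuous_w (by linarith) (by linarith)).mul hf').mul hg.continuous
  have hint₁ := intervalIntegrable_mul_mul_w hα hβ hLf hg.continuous
  have hint₂ := intervalIntegrable_mul_mul_w (α := α + 1) (β := β + 1) (by linarith)
    (by linarith) hf' hg.continuous_deriv_one
  have hftc := intervalIntegral.integral_eq_sub_of_hasDerivAt_of_le (by norm_num : (-1 : ℝ) ≤ 1)
    hcont.continuousOn (fun x hx ↦ hasDerivAt_w_mul_deriv_mul hf hg hx) (hint₁.add hint₂)
  rw [intervalIntegral.integral_add hint₁ hint₂, ← ip_eq_intervalIntegral,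
    ← ip_eq_intervalIntegral, w_one (by linarith), w_neg_one (by linarith)] at hftc
  linarith

lemma ip_jacobiOperator_comm (hα : -1 < α) (hβ : -1 < β) (hf : ContDiff ℝ 2 f)
    (hg : ContDiff ℝ 2 g) :
    ip α β (jacobiOperator α β f) g = ip α β f (jacobiOperator α β g) := by
  rw [ip_comm _ _ f, ip_jacobiOperator_left hα hβ hf (hg.of_le one_le_two),
    ip_jacobiOperator_left hα hβ hg (hf.of_le one_le_two), ip_comm]

lemma ip_eq_zero_of_jacobiOperator_eq_smul (hα : -1 < α) (hβ : -1 < β) (hf : ContDiff ℝ 2 f)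
    (hg : ContDiff ℝ 2 g) {μ ν : ℝ} (hμ : jacobiOperator α β f = μ • f)
    (hν : jacobiOperator α β g = ν • g) (hμν : μ ≠ ν) : ip α β f g = 0 := by
  have hsymm : μ * ip α β f g = ν * ip α β f g := by
    calc μ * ip α β f g = ip α β (jacobiOperator α β f) g := by rw [hμ, ip_smul_left]
      _ = ip α β f (jacobiOperator α β g) := ip_jacobiOperator_comm hα hβ hf hg
      _ = ν * ip α β f g := by rw [hν, ip_comm, ip_smul_left, ip_comm]
  by_contra hne
  exact hμν (mul_right_cancel₀ hne hsymm)

end JacobiOperator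

section Hypergeometric

open Polynomial

lemma poch_succ (a : ℝ) (k : ℕ) : poch a (k + 1) = poch a k * (a + k) :=
  Finset.prod_range_succ _ _

lemma poch_neg_natCast_eq_zero {n k : ℕ} (h : n < k) : poch (-n) k = 0 :=
  Finset.prod_eq_zero (Finset.mem_range.mpr h) (neg_add_cancel _)

/-- The terminating Gauss hypergeometric series `₂F₁(-n, b; c; X)`, as a polynomial. -/
def hypergeometricPoly (n : ℕ) (b c : ℝ) : ℝ[X] :=
  ∑ k ∈ Finset.range (n + 1), C (poch (-n) k * poch b k / (poch c k * k.factorial)) * X ^ k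

lemma coeff_hypergeometricPoly (n : ℕ) (b c : ℝ) (k : ℕ) :
    (hypergeometricPoly n b c).coeff k =
      poch (-n) k * poch b k / (poch c k * k.factorial) := by
  simp only [hypergeometricPoly, finsetSum_coeff, coeff_C_mul_X_pow, Finset.sum_ite_eq,
    Finset.mem_range, ite_eq_left_iff, not_lt]
  intro hk
  simp [poch_neg_natCast_eq_zero hk]

lemma coeff_hypergeometricPoly_succ (n : ℕ) (b : ℝ) {c : ℝ} {k : ℕ} (hc : c + k ≠ 0) :
    (hypergeometricPoly n b c).coeff (k + 1) * ((c + k) * (k + 1)) =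
      (k - n) * (b + k) * (hypergeometricPoly n b c).coeff k := by
  have hratio : (hypergeometricPoly n b c).coeff (k + 1) =
      (hypergeometricPoly n b c).coeff k * ((-n + k) * (b + k) / ((c + k) * (k + 1))) := by
    simp only [coeff_hypergeometricPoly, poch_succ, Nat.factorial_succ, ← mul_div_mul_comm]
    push_cast
    ring_nf
  have hk : (k : ℝ) + 1 ≠ 0 := by positivity
  rw [hratio]
  field_simp
  ring

lemma coeff_X_mul_derivative {R : Type*} [CommSemiring R] (p : R[X]) (k : ℕ) :
    (X * derivative p).coeff k = k * p.coeff k := by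
  cases k with
  | zero => simp
  | succ k => rw [coeff_X_mul, coeff_derivative]; push_cast; ring

lemma hypergeometricPoly_ode (n : ℕ) (b : ℝ) {c : ℝ} (hc : ∀ k : ℕ, c + k ≠ 0) :
    X * (1 - X) * derivative (derivative (hypergeometricPoly n b c)) +
        (C c - C (b + 1 - n) * X) * derivative (hypergeometricPoly n b c) +
        C (n * b) * hypergeometricPoly n b c = 0 := by
  set q := hypergeometricPoly n b c
  -- The Euler operator `X * d/dX` is diagonal on monomials, so each term has simple coefficients.
  have heuler : X * (1 - X) * derivative (derivative q) +
        (C c - C (b + 1 - n) * X) * derivative q + C (n * b) * q =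
      X * derivative (derivative q) + C c * derivative q
        - (X * derivative (X * derivative q) + C (b - n) * (X * derivative q) - C (n * b) * q) := by
    simp only [derivative_mul, derivative_X, C_add, C_sub, map_one]
    ring
  rw [heuler]
  ext k
  simp only [coeff_add, coeff_sub, coeff_C_mul, coeff_X_mul_derivative, coeff_derivative,
    coeff_zero]
  linear_combination coeff_hypergeometricPoly_succ n b (hc k)

end Hypergeometric

section JacobiPolynomial

open Polynomial

variable {α β : ℝ}

lemma J_eq_eval_hypergeometricPoly (α β : ℝ) (n : ℕ) :
    J α β n =
      (2 ^ n / poch (n + α + β + 1) n * (poch (α + 1) n / n.factorial)) • fun t ↦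
        (hypergeometricPoly n (n + α + β + 1) (α + 1)).eval ((1 - t) / 2) := by
  ext t
  simp [J, JP, hypergeometricPoly, eval_finsetSum, mul_assoc]

lemma contDiff_J (α β : ℝ) (n : ℕ) {k : WithTop ℕ∞} : ContDiff ℝ k (J α β n) := by
  rw [J_eq_eval_hypergeometricPoly]
  have hz : ContDiff ℝ k fun t : ℝ ↦ (1 - t) / 2 := by fun_prop
  have heval (q : ℝ[X]) : ContDiff ℝ k fun t ↦ q.eval t := by
    simpa only [coe_aeval_eq_eval] using contDiff_aeval (𝕜 := ℝ) q k
  exact contDiff_const.smul ((heval _).comp hz)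

lemma deriv_eval_one_sub_div_two (q : ℝ[X]) :
    deriv (fun t : ℝ ↦ q.eval ((1 - t) / 2)) =
      (-1 / 2 : ℝ) • fun t ↦ (derivative q).eval ((1 - t) / 2) := by
  ext t
  have hz : HasDerivAt (fun t : ℝ ↦ (1 - t) / 2) (-1 / 2) t :=
    ((hasDerivAt_id t).const_sub 1).div_const 2
  rw [Pi.smul_apply, smul_eq_mul, mul_comm]
  exact ((q.hasDerivAt ((1 - t) / 2)).comp t hz).deriv

lemma jacobiOperator_smul (α β c : ℝ) (f : ℝ → ℝ) :
    jacobiOperator α β (c • f) = c • jacobiOperator α β f := by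
  have hderiv (g : ℝ → ℝ) : deriv (c • g) = c • deriv g :=
    funext fun _ ↦ deriv_const_smul_field c g
  ext x
  simp only [jacobiOperator, hderiv, Pi.smul_apply, smul_eq_mul]
  ring

lemma jacobiOperator_eval_one_sub_div_two (α β : ℝ) (q : ℝ[X]) :
    jacobiOperator α β (fun t ↦ q.eval ((1 - t) / 2)) = fun t ↦
      (X * (1 - X) * derivative (derivative q) +
        (C (α + 1) - C (α + β + 2) * X) * derivative q).eval ((1 - t) / 2) := by
  ext t
  simp only [jacobiOperator, deriv_eval_one_sub_div_two, deriv_const_smul_field, Pi.smul_apply,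
    smul_eq_mul, eval_add, eval_sub, eval_mul, eval_one, eval_X, eval_C]
  ring

lemma jacobiOperator_J (hα : -1 < α) (β : ℝ) (n : ℕ) :
    jacobiOperator α β (J α β n) = (-(n * (n + α + β + 1)) : ℝ) • J α β n := by
  have hc (k : ℕ) : α + 1 + k ≠ 0 := by linarith [(k.cast_nonneg : (0 : ℝ) ≤ k)]
  rw [J_eq_eval_hypergeometricPoly, jacobiOperator_smul, smul_comm,
    jacobiOperator_eval_one_sub_div_two]
  congr 1
  ext t
  have hode := congrArg (eval ((1 - t) / 2)) (hypergeometricPoly_ode n (n + α + β + 1) hc)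
  simp only [eval_add, eval_sub, eval_mul, eval_one, eval_X, eval_C, eval_zero, Pi.smul_apply,
    smul_eq_mul] at hode ⊢
  linear_combination hode

lemma natCast_mul_natCast_add_injective {c : ℝ} (hc : -1 < c) :
    Function.Injective fun n : ℕ ↦ (n : ℝ) * (n + c) := by
  intro m n hmn
  by_contra hne
  have hfactor : ((m : ℝ) - n) * ((m + n : ℕ) + c) = 0 := by
    push_cast
    linear_combination hmn
  have hpos : (1 : ℝ) ≤ (m + n : ℕ) := by exact_mod_cast (by omega : 1 ≤ m + n)
  rcases mul_eq_zero.mp hfactor with h | h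
  · exact hne (by exact_mod_cast sub_eq_zero.mp h)
  · linarith

lemma ip_J_J_of_ne (hα : -1 < α) (hβ : -1 < β) {m n : ℕ} (hmn : m ≠ n) :
    ip α β (J α β m) (J α β n) = 0 := by
  refine ip_eq_zero_of_jacobiOperator_eq_smul hα hβ (contDiff_J α β m) (contDiff_J α β n)
    (jacobiOperator_J hα β m) (jacobiOperator_J hα β n) fun h ↦ hmn ?_
  refine natCast_mul_natCast_add_injective (c := α + β + 1) (by linarith) ?_
  linear_combination -h

end JacobiPolynomial

section RepeatedIntegral

variable {F : Type*} [NormedAddCommGroup F] [NormedSpace ℝ F]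

/-- Cauchy's kernel formula for the `(r + 1)`-fold primitive of `f` based at `θ`; shifting the
index by one avoids the truncated subtraction `s - 1` in the exponent. -/
def repeatedIntegral (θ : ℝ) (r : ℕ) (f : ℝ → F) (x : ℝ) : F :=
  ∫ t in θ..x, ((x - t) ^ r / r.factorial) • f t

lemma repeatedIntegral_self (θ : ℝ) (r : ℕ) (f : ℝ → F) : repeatedIntegral θ r f θ = 0 :=
  intervalIntegral.integral_same

variable [CompleteSpace F] {f : ℝ → F}

lemma hasDerivAt_repeatedIntegral_zero (θ : ℝ) (hf : Continuous f) (x : ℝ) :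
    HasDerivAt (repeatedIntegral θ 0 f) (f x) x := by
  have h : repeatedIntegral θ 0 f = fun x ↦ ∫ t in θ..x, f t := by ext; simp [repeatedIntegral]
  rw [h]
  exact (hf.integral_hasStrictDerivAt θ x).hasDerivAt

lemma continuous_repeatedIntegral_zero (θ : ℝ) (hf : Continuous f) :
    Continuous (repeatedIntegral θ 0 f) :=
  continuous_iff_continuousAt.mpr fun x ↦ (hasDerivAt_repeatedIntegral_zero θ hf x).continuousAt

lemma hasDerivAt_const_sub_pow_succ_div_factorial (x : ℝ) (r : ℕ) (t : ℝ) :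
    HasDerivAt (fun t : ℝ ↦ (x - t) ^ (r + 1) / (r + 1).factorial)
      (-((x - t) ^ r / r.factorial)) t := by
  refine ((((hasDerivAt_id t).const_sub x).pow (r + 1)).div_const _).congr_deriv ?_
  rw [Nat.factorial_succ]
  push_cast
  simp only [id]
  field_simp

lemma repeatedIntegral_succ (θ : ℝ) (r : ℕ) (hf : Continuous f) :
    repeatedIntegral θ (r + 1) f = repeatedIntegral θ r (repeatedIntegral θ 0 f) := by
  ext x
  have hparts := intervalIntegral.integral_smul_deriv_eq_deriv_smul (a := θ) (b := x)
    (fun t _ ↦ hasDerivAt_const_sub_pow_succ_div_factorial x r t)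
    (fun t _ ↦ hasDerivAt_repeatedIntegral_zero θ hf t)
    (Continuous.intervalIntegrable (by fun_prop) _ _) (hf.intervalIntegrable _ _)
  simpa [repeatedIntegral_self, repeatedIntegral] using hparts

lemma hasDerivAt_repeatedIntegral_succ (θ : ℝ) (r : ℕ) (hf : Continuous f) (x : ℝ) :
    HasDerivAt (repeatedIntegral θ (r + 1) f) (repeatedIntegral θ r f x) x := by
  induction r generalizing f with
  | zero =>
    rw [repeatedIntegral_succ θ 0 hf]
    exact hasDerivAt_repeatedIntegral_zero θ (continuous_repeatedIntegral_zero θ hf) x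
  | succ r ih =>
    rw [repeatedIntegral_succ θ (r + 1) hf, repeatedIntegral_succ θ r hf]
    exact ih (continuous_repeatedIntegral_zero θ hf)

lemma iteratedDeriv_repeatedIntegral_add (θ : ℝ) (r k : ℕ) (hf : Continuous f) :
    iteratedDeriv k (repeatedIntegral θ (r + k) f) = repeatedIntegral θ r f := by
  induction k with
  | zero => simp
  | succ k ih =>
    rw [← add_assoc, iteratedDeriv_succ',
      funext fun x ↦ (hasDerivAt_repeatedIntegral_succ θ (r + k) hf x).deriv, ih]

lemma iteratedDeriv_repeatedIntegral_self {k r : ℕ} (hkr : k ≤ r) (θ : ℝ) (hf : Continuous f) :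
    iteratedDeriv k (repeatedIntegral θ r f) θ = 0 := by
  obtain ⟨d, rfl⟩ := Nat.exists_eq_add_of_le' hkr
  rw [iteratedDeriv_repeatedIntegral_add θ d k hf, repeatedIntegral_self]

lemma iteratedDeriv_succ_repeatedIntegral (θ : ℝ) (r : ℕ) (hf : Continuous f) :
    iteratedDeriv (r + 1) (repeatedIntegral θ r f) = f := by
  have h := iteratedDeriv_repeatedIntegral_add θ 0 r hf
  rw [zero_add] at h
  rw [iteratedDeriv_succ, h]
  exact funext fun x ↦ (hasDerivAt_repeatedIntegral_zero θ hf x).deriv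

end RepeatedIntegral

section SobolevPolynomial

variable {α β θ : ℝ} {s n : ℕ}

lemma SJ_of_lt (α β θ : ℝ) (h : n < s) :
    SJ α β s θ n = fun x ↦ (x - θ) ^ n / n.factorial := by
  ext x
  exact if_pos h

lemma SJ_of_le (α β θ : ℝ) (h : s ≤ n) :
    SJ α β s θ n = repeatedIntegral θ (s - 1) (J α β (n - s)) := by
  ext x
  exact if_neg h.not_gt

lemma iteratedDeriv_SJ_self_of_lt (h : n < s) (k : ℕ) :
    iteratedDeriv k (SJ α β s θ n) θ = if k = n then 1 else 0 := by
  rw [SJ_of_lt α β θ h, iteratedDeriv_div_const,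
    iteratedDeriv_comp_sub_const k (fun x : ℝ ↦ x ^ n) θ]
  simp only [sub_self, iteratedDeriv_fun_pow_zero]
  split_ifs <;> simp [Nat.factorial_ne_zero]

lemma iteratedDeriv_SJ_of_lt (h : n < s) : iteratedDeriv s (SJ α β s θ n) = 0 := by
  ext x
  rw [SJ_of_lt α β θ h, iteratedDeriv_div_const,
    iteratedDeriv_comp_sub_const s (fun x : ℝ ↦ x ^ n) θ]
  simp [Nat.descFactorial_of_lt h]

lemma iteratedDeriv_SJ_self_of_le (h : s ≤ n) {k : ℕ} (hk : k < s) :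
    iteratedDeriv k (SJ α β s θ n) θ = 0 := by
  rw [SJ_of_le α β θ h]
  exact iteratedDeriv_repeatedIntegral_self (by omega) θ (contDiff_J (k := 0) α β _).continuous

lemma iteratedDeriv_SJ_of_le (hs : 1 ≤ s) (h : s ≤ n) :
    iteratedDeriv s (SJ α β s θ n) = J α β (n - s) := by
  obtain ⟨r, rfl⟩ := Nat.exists_eq_add_of_le' hs
  rw [SJ_of_le α β θ h]
  exact iteratedDeriv_succ_repeatedIntegral θ r (contDiff_J (k := 0) α β _).continuous

lemma ipS_SJ_left_of_lt (h : n < s) (lam : ℕ → ℝ) (g : ℝ → ℝ) :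
    ipS α β s θ lam (SJ α β s θ n) g = lam n * iteratedDeriv n g θ := by
  simp [ipS, iteratedDeriv_SJ_of_lt h, iteratedDeriv_SJ_self_of_lt h, ip_zero_left, h]

lemma ipS_SJ_left_of_le (hs : 1 ≤ s) (h : s ≤ n) (lam : ℕ → ℝ) (g : ℝ → ℝ) :
    ipS α β s θ lam (SJ α β s θ n) g = ip α β (J α β (n - s)) (iteratedDeriv s g) := by
  rw [ipS, iteratedDeriv_SJ_of_le hs h, add_eq_left]
  refine Finset.sum_eq_zero fun k hk ↦ ?_
  rw [iteratedDeriv_SJ_self_of_le h (Finset.mem_range.mp hk), mul_zero, zero_mul]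

lemma ipS_SJ_SJ_of_ne (hα : -1 < α) (hβ : -1 < β) (hs : 1 ≤ s) (θ : ℝ) (lam : ℕ → ℝ) {m n : ℕ}
    (hmn : m ≠ n) : ipS α β s θ lam (SJ α β s θ m) (SJ α β s θ n) = 0 := by
  rcases lt_or_ge m s with hm | hm <;> rcases lt_or_ge n s with hn | hn
  · rw [ipS_SJ_left_of_lt hm, iteratedDeriv_SJ_self_of_lt hn, if_neg hmn, mul_zero]
  · rw [ipS_SJ_left_of_lt hm, iteratedDeriv_SJ_self_of_le hn hm, mul_zero]
  · rw [ipS_SJ_left_of_le hs hm, iteratedDeriv_SJ_of_lt hn, ip_comm, ip_zero_left]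
  · rw [ipS_SJ_left_of_le hs hm, iteratedDeriv_SJ_of_le hs hn, ip_J_J_of_ne hα hβ (by omega)]

end SobolevPolynomial

theorem statement11_general (α β : ℝ) (hα : -1 < α) (hβ : -1 < β) (s : ℕ) (hs : 1 ≤ s) (θ : ℝ)
    (lam : ℕ → ℝ) :
    (∀ m n : ℕ, m ≠ n → ipS α β s θ lam (SJ α β s θ m) (SJ α β s θ n) = 0) ∧
    (∀ n : ℕ, n < s → ipS α β s θ lam (SJ α β s θ n) (SJ α β s θ n) = lam n) ∧
    (∀ n : ℕ, s ≤ n → ipS α β s θ lam (SJ α β s θ n) (SJ α β s θ n) = hJ α β (n - s)) := by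
  refine ⟨fun m n hmn ↦ ipS_SJ_SJ_of_ne hα hβ hs θ lam hmn, fun n hn ↦ ?_, fun n hn ↦ ?_⟩
  · rw [ipS_SJ_left_of_lt hn, iteratedDeriv_SJ_self_of_lt hn, if_pos rfl, mul_one]
  · rw [ipS_SJ_left_of_le hs hn, iteratedDeriv_SJ_of_le hs hn, hJ]

theorem statement11 (α β : ℝ) (hα : -1 < α) (hβ : -1 < β) (s : ℕ) (hs : 1 ≤ s)
    (θ : ℝ) (hθ : θ ∈ Icc (-1 : ℝ) 1) (lam : ℕ → ℝ) (hlam : ∀ k, k < s → 0 < lam k) :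
    (∀ m n : ℕ, m ≠ n → ipS α β s θ lam (SJ α β s θ m) (SJ α β s θ n) = 0) ∧
    (∀ n : ℕ, n < s → ipS α β s θ lam (SJ α β s θ n) (SJ α β s θ n) = lam n) ∧
    (∀ n : ℕ, s ≤ n → ipS α β s θ lam (SJ α β s θ n) (SJ α β s θ n) = hJ α β (n - s)) :=
  statement11_general α β hα hβ s hs θ lam

end JacobiApprox
end
end

section
/- Let α, β > -1, s ∈ ℕ, θ ∈ [-1,1], 1 ≤ p ≤ ∞, and let f ∈ W_p^s(w_{α,β}) (f ∈ C^s[-1,1] when p = ∞). Then for every n ≥ 0, 𝒮_{n,θ}^{α-s,β-s} f(x) = ∑_{k=0}^{min(n,s-1)} f^{(k)}(θ) (x-θ)^k/k! + ∫_θ^x ((x-t)^{s-1}/(s-1)!) S_{n-s}^{α,β} f^{(s)}(t) dt (where S_m^{α,β} = 0 for m < 0); in particular, for n ≥ s, the s-th derivative satisfies (𝒮_{n,θ}^{α-s,β-s} f)^{(s)} = S_{n-s}^{α,β}(f^{(s)}). -/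
open MeasureTheory Set ENNReal NNReal

noncomputable section

namespace JacobiApprox

/-!
The argument is purely formal in the orthogonal system. Integrating a continuous function `s` times
from `θ` gives, by Taylor's formula with integral remainder, the integral against the kernel
`(x - t) ^ (s - 1) / (s - 1)!`; its derivatives of order `< s` vanish at `θ` and its `s`-th
derivative is the original function. Hence pairing with a basis function of index `k < s` in the
Sobolev form only sees `f^{(k)}(θ)`, and pairing with one of index `k ≥ s` only sees the pairing of
`f^{(s)}` with the function of index `k - s` of the original system. The Sobolev coefficients are
therefore the derivatives of `f` at `θ` followed by the original coefficients of `f^{(s)}`.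
-/

section IteratedPrimitive

variable {F : Type*} [NormedAddCommGroup F] [NormedSpace ℝ F]

/-- The primitive of `g` vanishing at `θ`; its iterates `(primitive θ)^[s]` are the repeated
integrals from `θ` that underlie the Sobolev basis. -/
def primitive (θ : ℝ) (g : ℝ → F) (x : ℝ) : F := ∫ t in θ..x, g t

lemma iterate_succ_primitive_self (θ : ℝ) (g : ℝ → F) (m : ℕ) :
    (primitive θ)^[m + 1] g θ = 0 := by
  rw [Function.iterate_succ_apply', primitive, intervalIntegral.integral_same]

variable [CompleteSpace F] {g : ℝ → F}

lemma hasDerivAt_primitive (θ : ℝ) (hg : Continuous g) (x : ℝ) :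
    HasDerivAt (primitive θ g) (g x) x :=
  intervalIntegral.integral_hasDerivAt_right (hg.intervalIntegrable _ _)
    hg.stronglyMeasurable.stronglyMeasurableAtFilter hg.continuousAt

lemma continuous_iterate_primitive (θ : ℝ) (hg : Continuous g) (m : ℕ) :
    Continuous ((primitive θ)^[m] g) := by
  induction m with
  | zero => exact hg
  | succ m ih =>
    rw [Function.iterate_succ_apply']
    exact continuous_iff_continuousAt.2 fun x => (hasDerivAt_primitive θ ih x).continuousAt

lemma hasDerivAt_iterate_succ_primitive (θ : ℝ) (hg : Continuous g) (m : ℕ) (x : ℝ) :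
    HasDerivAt ((primitive θ)^[m + 1] g) ((primitive θ)^[m] g x) x := by
  rw [Function.iterate_succ_apply']
  exact hasDerivAt_primitive θ (continuous_iterate_primitive θ hg m) x

lemma deriv_iterate_succ_primitive (θ : ℝ) (hg : Continuous g) (m : ℕ) :
    deriv ((primitive θ)^[m + 1] g) = (primitive θ)^[m] g :=
  funext fun x => (hasDerivAt_iterate_succ_primitive θ hg m x).deriv

lemma contDiff_iterate_primitive (θ : ℝ) (hg : Continuous g) (m : ℕ) :
    ContDiff ℝ m ((primitive θ)^[m] g) := by
  induction m with
  | zero => simpa using hg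
  | succ m ih =>
    rw [Nat.cast_add, Nat.cast_one, contDiff_succ_iff_deriv, deriv_iterate_succ_primitive θ hg]
    exact ⟨fun x => (hasDerivAt_iterate_succ_primitive θ hg m x).differentiableAt, by simp, ih⟩

lemma iteratedDeriv_iterate_primitive (θ : ℝ) (hg : Continuous g) {j m : ℕ} (hjm : j ≤ m) :
    iteratedDeriv j ((primitive θ)^[m] g) = (primitive θ)^[m - j] g := by
  obtain ⟨i, rfl⟩ := Nat.exists_eq_add_of_le' hjm
  rw [Nat.add_sub_cancel]
  induction j with
  | zero => rw [iteratedDeriv_zero, add_zero]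
  | succ j ih =>
    rw [iteratedDeriv_succ', ← add_assoc, deriv_iterate_succ_primitive θ hg,
      ih (Nat.le_add_left j i)]

/-- Cauchy's formula for repeated integration. It is Taylor's formula with integral remainder for
the left-hand side, whose Taylor polynomial at `θ` vanishes. -/
lemma iterate_succ_primitive_eq_integral (θ : ℝ) (hg : Continuous g) (m : ℕ) (x : ℝ) :
    (primitive θ)^[m + 1] g x = ∫ t in θ..x, ((x - t) ^ m / m.factorial) • g t := by
  rcases eq_or_ne θ x with rfl | hx
  · rw [iterate_succ_primitive_self, intervalIntegral.integral_same]
  set G := (primitive θ)^[m + 1] g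
  have hG : ContDiff ℝ (m + 1 : ℕ) G := contDiff_iterate_primitive θ hg (m + 1)
  have hderiv : ∀ j ≤ m + 1, ∀ t ∈ uIcc θ x,
      iteratedDerivWithin j G (uIcc θ x) t = (primitive θ)^[m + 1 - j] g t := fun j hj t ht => by
    rw [iteratedDerivWithin_eq_iteratedDeriv (uniqueDiffOn_uIcc hx)
      (hG.of_le (by exact_mod_cast hj)).contDiffAt ht, iteratedDeriv_iterate_primitive θ hg hj]
  have htaylor : taylorWithinEval G m (uIcc θ x) θ x = 0 := by
    rw [taylor_within_apply]
    refine Finset.sum_eq_zero fun j hj => ?_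
    have hjm : j ≤ m := Finset.mem_range_succ_iff.1 hj
    rw [hderiv j (by omega) θ left_mem_uIcc, Nat.succ_sub hjm, iterate_succ_primitive_self,
      smul_zero]
  calc G x = G x - taylorWithinEval G m (uIcc θ x) θ x := by rw [htaylor, sub_zero]
    _ = ∫ t in θ..x, ((x - t) ^ m / m.factorial) • iteratedDerivWithin (m + 1) G (uIcc θ x) t :=
        taylor_integral_remainder hG.contDiffOn
    _ = ∫ t in θ..x, ((x - t) ^ m / m.factorial) • g t :=
        intervalIntegral.integral_congr fun t ht => by
          simp only [hderiv (m + 1) le_rfl t ht, Nat.sub_self, Function.iterate_zero, id]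

end IteratedPrimitive

section TaylorMonomial

variable {𝕜 : Type*} [NontriviallyNormedField 𝕜] (a : 𝕜)

lemma iteratedDeriv_sub_pow_div_factorial (j k : ℕ) (x : 𝕜) :
    iteratedDeriv j (fun x : 𝕜 => (x - a) ^ k / k.factorial) x =
      k.descFactorial j * (x - a) ^ (k - j) / k.factorial := by
  simp only [iteratedDeriv_div_const, iteratedDeriv_comp_sub_const j (· ^ k), iteratedDeriv_pow]

lemma iteratedDeriv_sub_pow_div_factorial_of_lt {j k : ℕ} (hkj : k < j) :
    iteratedDeriv j (fun x : 𝕜 => (x - a) ^ k / k.factorial) = 0 := by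
  ext x
  rw [iteratedDeriv_sub_pow_div_factorial, Nat.descFactorial_of_lt hkj, Nat.cast_zero, zero_mul,
    zero_div, Pi.zero_apply]

lemma iteratedDeriv_sub_pow_div_factorial_self [CharZero 𝕜] (j k : ℕ) :
    iteratedDeriv j (fun x : 𝕜 => (x - a) ^ k / k.factorial) a = if j = k then 1 else 0 := by
  rw [iteratedDeriv_sub_pow_div_factorial, sub_self]
  rcases lt_trichotomy j k with hjk | rfl | hkj
  · simp [hjk.ne, (Nat.sub_pos_of_lt hjk).ne']
  · simp [Nat.descFactorial_self, Nat.factorial_ne_zero]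
  · simp [hkj.ne', Nat.descFactorial_of_lt hkj]

end TaylorMonomial

section OrthogonalExpansion

variable (B : (ℝ → ℝ) → (ℝ → ℝ) → ℝ) (φ : ℕ → ℝ → ℝ)

/-- The Fourier coefficient of `f` along `φ n` with respect to the form `B`. Division by zero makes
it `0` when `B (φ n) (φ n) = 0`. -/
def orthoCoeff (n : ℕ) (f : ℝ → ℝ) : ℝ := B f (φ n) / B (φ n) (φ n)

/-- The `n`-th partial sum, over the indices `0, …, n`, of the Fourier expansion of `f` in the
system `φ` with respect to the form `B`. -/
def orthoSum (n : ℕ) (f : ℝ → ℝ) (x : ℝ) : ℝ :=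
  ∑ k ∈ Finset.range (n + 1), orthoCoeff B φ k f * φ k x

variable {φ}

lemma integral_mul_orthoSum (hφ : ∀ k, Continuous (φ k)) {K : ℝ → ℝ} (hK : Continuous K) (n : ℕ)
    (f : ℝ → ℝ) (a b : ℝ) :
    ∫ t in a..b, K t * orthoSum B φ n f t =
      ∑ k ∈ Finset.range (n + 1), orthoCoeff B φ k f * ∫ t in a..b, K t * φ k t := by
  simp only [orthoSum, Finset.mul_sum, mul_left_comm (K _)]
  rw [intervalIntegral.integral_finsetSum fun k _ => by
    have := hφ k
    exact Continuous.intervalIntegrable (by fun_prop) _ _]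
  simp only [intervalIntegral.integral_const_mul]

end OrthogonalExpansion

section SobolevSystem

/-- The Sobolev system of order `s` at `θ` built from `φ`: the Taylor monomials of degree `< s`,
followed by the `s`-fold repeated integrals of the `φ k`. For `φ = J α β` this is `SJ α β s θ`. -/
def sobolevBasis (φ : ℕ → ℝ → ℝ) (s : ℕ) (θ : ℝ) (n : ℕ) (x : ℝ) : ℝ :=
  if n < s then (x - θ) ^ n / n.factorial
  else ∫ t in θ..x, (x - t) ^ (s - 1) / (s - 1).factorial * φ (n - s) t

/-- The discrete-continuous Sobolev form of order `s` at `θ` built from `B`. For `B = ip α β` this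
is `ipS α β s θ lam`. -/
def sobolevForm (B : (ℝ → ℝ) → (ℝ → ℝ) → ℝ) (s : ℕ) (θ : ℝ) (lam : ℕ → ℝ) (f g : ℝ → ℝ) : ℝ :=
  B (iteratedDeriv s f) (iteratedDeriv s g) +
    ∑ k ∈ Finset.range s, lam k * iteratedDeriv k f θ * iteratedDeriv k g θ

variable {B : (ℝ → ℝ) → (ℝ → ℝ) → ℝ} {φ : ℕ → ℝ → ℝ} {s n : ℕ} {lam : ℕ → ℝ}

lemma sobolevBasis_of_lt (φ : ℕ → ℝ → ℝ) (θ : ℝ) (hn : n < s) :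
    sobolevBasis φ s θ n = fun x => (x - θ) ^ n / n.factorial :=
  funext fun _ => if_pos hn

lemma sobolevBasis_of_le (φ : ℕ → ℝ → ℝ) (θ : ℝ) (hn : s ≤ n) (x : ℝ) :
    sobolevBasis φ s θ n x =
      ∫ t in θ..x, (x - t) ^ (s - 1) / (s - 1).factorial * φ (n - s) t :=
  if_neg hn.not_gt

lemma sobolevBasis_eq_iterate_primitive (hs : 1 ≤ s) (hφ : ∀ k, Continuous (φ k)) (θ : ℝ)
    (hn : s ≤ n) : sobolevBasis φ s θ n = (primitive θ)^[s] (φ (n - s)) := by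
  obtain ⟨m, rfl⟩ := Nat.exists_eq_add_of_le' hs
  ext x
  rw [sobolevBasis_of_le φ θ hn, iterate_succ_primitive_eq_integral θ (hφ _)]
  rfl

lemma contDiff_sobolevBasis (hs : 1 ≤ s) (hφ : ∀ k, Continuous (φ k)) (θ : ℝ) (n : ℕ) :
    ContDiff ℝ s (sobolevBasis φ s θ n) := by
  rcases lt_or_ge n s with hn | hn
  · rw [sobolevBasis_of_lt φ θ hn]
    fun_prop
  · rw [sobolevBasis_eq_iterate_primitive hs hφ θ hn]
    exact contDiff_iterate_primitive θ (hφ _) s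

lemma iteratedDeriv_sobolevBasis_of_lt (φ : ℕ → ℝ → ℝ) (θ : ℝ) (hn : n < s) :
    iteratedDeriv s (sobolevBasis φ s θ n) = 0 := by
  rw [sobolevBasis_of_lt φ θ hn, iteratedDeriv_sub_pow_div_factorial_of_lt θ hn]

lemma iteratedDeriv_sobolevBasis_of_le (hs : 1 ≤ s) (hφ : ∀ k, Continuous (φ k)) (θ : ℝ)
    (hn : s ≤ n) : iteratedDeriv s (sobolevBasis φ s θ n) = φ (n - s) := by
  rw [sobolevBasis_eq_iterate_primitive hs hφ θ hn, iteratedDeriv_iterate_primitive θ (hφ _) le_rfl,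
    Nat.sub_self, Function.iterate_zero_apply]

lemma iteratedDeriv_sobolevBasis_self (hs : 1 ≤ s) (hφ : ∀ k, Continuous (φ k)) (θ : ℝ) {j : ℕ}
    (hj : j < s) (n : ℕ) :
    iteratedDeriv j (sobolevBasis φ s θ n) θ = if j = n then 1 else 0 := by
  rcases lt_or_ge n s with hn | hn
  · rw [sobolevBasis_of_lt φ θ hn, iteratedDeriv_sub_pow_div_factorial_self]
  · obtain ⟨m, hm⟩ := Nat.exists_eq_add_of_lt hj
    rw [sobolevBasis_eq_iterate_primitive hs hφ θ hn,
      iteratedDeriv_iterate_primitive θ (hφ _) hj.le, show s - j = m + 1 by omega,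
      iterate_succ_primitive_self, if_neg (hj.trans_le hn).ne]

lemma sobolevForm_sobolevBasis_of_lt (hB : ∀ g, B g 0 = 0) (hs : 1 ≤ s)
    (hφ : ∀ k, Continuous (φ k)) (θ : ℝ) (lam : ℕ → ℝ) (f : ℝ → ℝ) (hn : n < s) :
    sobolevForm B s θ lam f (sobolevBasis φ s θ n) = lam n * iteratedDeriv n f θ := by
  rw [sobolevForm, iteratedDeriv_sobolevBasis_of_lt φ θ hn, hB, zero_add,
    Finset.sum_eq_single_of_mem n (Finset.mem_range.2 hn) fun j hj hjn => by
      rw [iteratedDeriv_sobolevBasis_self hs hφ θ (Finset.mem_range.1 hj), if_neg hjn, mul_zero],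
    iteratedDeriv_sobolevBasis_self hs hφ θ hn, if_pos rfl, mul_one]

lemma sobolevForm_sobolevBasis_of_le (B : (ℝ → ℝ) → (ℝ → ℝ) → ℝ) (hs : 1 ≤ s)
    (hφ : ∀ k, Continuous (φ k)) (θ : ℝ) (lam : ℕ → ℝ) (f : ℝ → ℝ) (hn : s ≤ n) :
    sobolevForm B s θ lam f (sobolevBasis φ s θ n) = B (iteratedDeriv s f) (φ (n - s)) := by
  rw [sobolevForm, iteratedDeriv_sobolevBasis_of_le hs hφ θ hn, Finset.sum_eq_zero, add_zero]
  intro j hj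
  have hjs : j < s := Finset.mem_range.1 hj
  rw [iteratedDeriv_sobolevBasis_self hs hφ θ hjs, if_neg (hjs.trans_le hn).ne, mul_zero]

lemma orthoCoeff_sobolev_of_lt (hB : ∀ g, B g 0 = 0) (hs : 1 ≤ s) (hφ : ∀ k, Continuous (φ k))
    (θ : ℝ) (f : ℝ → ℝ) (hn : n < s) (hlam : lam n ≠ 0) :
    orthoCoeff (sobolevForm B s θ lam) (sobolevBasis φ s θ) n f = iteratedDeriv n f θ := by
  rw [orthoCoeff, sobolevForm_sobolevBasis_of_lt hB hs hφ θ lam _ hn,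
    sobolevForm_sobolevBasis_of_lt hB hs hφ θ lam _ hn, iteratedDeriv_sobolevBasis_self hs hφ θ hn,
    if_pos rfl, mul_one, mul_div_cancel_left₀ _ hlam]

lemma orthoCoeff_sobolev_of_le (B : (ℝ → ℝ) → (ℝ → ℝ) → ℝ) (hs : 1 ≤ s)
    (hφ : ∀ k, Continuous (φ k)) (θ : ℝ) (lam : ℕ → ℝ) (f : ℝ → ℝ) (hn : s ≤ n) :
    orthoCoeff (sobolevForm B s θ lam) (sobolevBasis φ s θ) n f =
      orthoCoeff B φ (n - s) (iteratedDeriv s f) := by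
  rw [orthoCoeff, orthoCoeff, sobolevForm_sobolevBasis_of_le B hs hφ θ lam _ hn,
    sobolevForm_sobolevBasis_of_le B hs hφ θ lam _ hn, iteratedDeriv_sobolevBasis_of_le hs hφ θ hn]

lemma sum_range_orthoCoeff_sobolev (hB : ∀ g, B g 0 = 0) (hs : 1 ≤ s)
    (hφ : ∀ k, Continuous (φ k)) (θ : ℝ) (hlam : ∀ k < s, lam k ≠ 0) (f : ℝ → ℝ) {m : ℕ}
    (hm : m ≤ s) (x : ℝ) :
    ∑ k ∈ Finset.range m, orthoCoeff (sobolevForm B s θ lam) (sobolevBasis φ s θ) k f *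
        sobolevBasis φ s θ k x =
      ∑ k ∈ Finset.range m, iteratedDeriv k f θ * (x - θ) ^ k / k.factorial := by
  refine Finset.sum_congr rfl fun k hk => ?_
  have hks : k < s := (Finset.mem_range.1 hk).trans_le hm
  rw [orthoCoeff_sobolev_of_lt hB hs hφ θ f hks (hlam k hks), sobolevBasis_of_lt φ θ hks,
    mul_div_assoc]

lemma orthoSum_sobolev_of_le (hB : ∀ g, B g 0 = 0) (hs : 1 ≤ s) (hφ : ∀ k, Continuous (φ k))
    (θ : ℝ) (hlam : ∀ k < s, lam k ≠ 0) (f : ℝ → ℝ) (hn : s ≤ n) (x : ℝ) :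
    orthoSum (sobolevForm B s θ lam) (sobolevBasis φ s θ) n f x =
      (∑ k ∈ Finset.range s, iteratedDeriv k f θ * (x - θ) ^ k / k.factorial) +
        ∫ t in θ..x, (x - t) ^ (s - 1) / (s - 1).factorial *
          orthoSum B φ (n - s) (iteratedDeriv s f) t := by
  obtain ⟨m, rfl⟩ := Nat.exists_eq_add_of_le hn
  rw [orthoSum, add_assoc, Finset.sum_range_add,
    sum_range_orthoCoeff_sobolev hB hs hφ θ hlam f le_rfl, Nat.add_sub_cancel_left,
    integral_mul_orthoSum B hφ (by fun_prop)]
  congr 1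
  refine Finset.sum_congr rfl fun k _ => ?_
  rw [orthoCoeff_sobolev_of_le B hs hφ θ lam f (Nat.le_add_right s k),
    sobolevBasis_of_le φ θ (Nat.le_add_right s k), Nat.add_sub_cancel_left]

lemma iteratedDeriv_orthoSum_sobolev (B : (ℝ → ℝ) → (ℝ → ℝ) → ℝ) (hs : 1 ≤ s)
    (hφ : ∀ k, Continuous (φ k)) (θ : ℝ) (lam : ℕ → ℝ) (f : ℝ → ℝ) (hn : s ≤ n) :
    iteratedDeriv s (orthoSum (sobolevForm B s θ lam) (sobolevBasis φ s θ) n f) =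
      orthoSum B φ (n - s) (iteratedDeriv s f) := by
  obtain ⟨m, rfl⟩ := Nat.exists_eq_add_of_le hn
  ext x
  unfold orthoSum
  rw [iteratedDeriv_fun_sum fun k _ =>
    (contDiff_const.mul (contDiff_sobolevBasis hs hφ θ k)).contDiffAt]
  simp only [iteratedDeriv_const_mul_field]
  rw [add_assoc, Finset.sum_range_add, Nat.add_sub_cancel_left, Finset.sum_eq_zero fun k hk => by
    rw [iteratedDeriv_sobolevBasis_of_lt φ θ (Finset.mem_range.1 hk), Pi.zero_apply, mul_zero],
    zero_add]
  refine Finset.sum_congr rfl fun k _ => ?_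
  rw [orthoCoeff_sobolev_of_le B hs hφ θ lam f (Nat.le_add_right s k),
    iteratedDeriv_sobolevBasis_of_le hs hφ θ (Nat.le_add_right s k), Nat.add_sub_cancel_left]

theorem statement13_general (B : (ℝ → ℝ) → (ℝ → ℝ) → ℝ) (hB : ∀ g, B g 0 = 0)
    (φ : ℕ → ℝ → ℝ) (hφ : ∀ k, Continuous (φ k)) (s : ℕ) (hs : 1 ≤ s) (θ : ℝ) (lam : ℕ → ℝ)
    (hlam : ∀ k < s, lam k ≠ 0) (f : ℝ → ℝ) (hf : ContDiff ℝ s f) :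
    (∀ n x, orthoSum (sobolevForm B s θ lam) (sobolevBasis φ s θ) n f x =
      (∑ k ∈ Finset.range (min (n + 1) s), iteratedDeriv k f θ * (x - θ) ^ k / k.factorial)
        + (if n < s then 0 else
            ∫ t in θ..x, (x - t) ^ (s - 1) / (s - 1).factorial *
              orthoSum B φ (n - s) (iteratedDeriv s f) t)) ∧
    (∀ n, s ≤ n → iteratedDeriv s (orthoSum (sobolevForm B s θ lam) (sobolevBasis φ s θ) n f) =
      orthoSum B φ (n - s) (iteratedDeriv s f)) := by
  refine ⟨fun n x => ?_, fun n hn => iteratedDeriv_orthoSum_sobolev B hs hφ θ lam f hn⟩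
  rcases lt_or_ge n s with hn | hn
  · rw [if_pos hn, add_zero, min_eq_left hn]
    exact sum_range_orthoCoeff_sobolev hB hs hφ θ hlam f hn x
  · rw [if_neg hn.not_gt, min_eq_right (by omega)]
    exact orthoSum_sobolev_of_le hB hs hφ θ hlam f hn x

end SobolevSystem

lemma ip_zero_right (α β : ℝ) (f : ℝ → ℝ) : ip α β f 0 = 0 := by
  simp [ip]

lemma continuous_J (α β : ℝ) (n : ℕ) : Continuous (J α β n) := by
  unfold J JP
  fun_prop

theorem statement13 (α β : ℝ) (hα : -1 < α) (hβ : -1 < β) (s : ℕ) (hs : 1 ≤ s)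
    (θ : ℝ) (hθ : θ ∈ Icc (-1 : ℝ) 1) (lam : ℕ → ℝ) (hlam : ∀ k, k < s → 0 < lam k)
    (p : ℝ≥0∞) (hp : 1 ≤ p) (f : ℝ → ℝ) (hf : MemW α β p s f) :
    (∀ n : ℕ, ∀ x : ℝ, SS α β s θ lam n f x =
      (∑ k ∈ Finset.range (min (n + 1) s), iteratedDeriv k f θ * (x - θ) ^ k / k.factorial)
        + (if n < s then 0 else
            ∫ t in θ..x, (x - t) ^ (s - 1) / (s - 1).factorial *
              S α β (n - s) (iteratedDeriv s f) t)) ∧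
    (∀ n : ℕ, s ≤ n →
      iteratedDeriv s (SS α β s θ lam n f) = S α β (n - s) (iteratedDeriv s f)) :=
  statement13_general (ip α β) (ip_zero_right α β) (J α β) (continuous_J α β) s hs θ lam
    (fun k hk => (hlam k hk).ne') f hf.1

end JacobiApprox
end
end

section
/- Let α, β > -1 and 1 < p < ∞. There exists a constant c > 0 such that (∫_{-1}^1 (∫_{-1}^x |f(t)| dt)^p w_{α,β}(x) dx)^{1/p} ≤ c (∫_{-1}^1 |f(x)|^p w_{α,β}(x) dx)^{1/p} for all f ∈ L^p(w_{α,β}) if and only if β < p - 1. -/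
open MeasureTheory Set ENNReal NNReal

noncomputable section

namespace JacobiApprox

/-!
Sufficiency: factor `w_{α,β} = a * v` and let `a * b` be comparable to `w_{α,β}`, where
`a = (1-x)^{max α 0} (1+x)^{min β 0}` is decreasing, `v = (1-x)^{min α 0} (1+x)^{max β 0}` is
integrable and `b = (1+x)^{max β 0}`. Hölder's inequality bounds `(∫_{-1}^x |f|)^p` by
`(∫ b^{-1/(p-1)})^{p-1} ∫_{-1}^x |f|^p b`; since `a` is decreasing, `a(x)` may be moved under the
last integral as `a(t)`, and integrating against `v` gives the claim. The condition `β < p - 1` is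
what makes `b^{-1/(p-1)}` integrable.

Necessity: for `β ≥ p - 1` the functions `(1+t)⁻¹` cut off to `(-1+ε, 0)` have
`∫ |f|^p w_{α,β} = O(log (1/ε))`, whereas `∫_{-1}^x f = log (1/ε)` for all `x ≥ 0`, so the left-hand
side grows like `(log (1/ε))^p`.
-/

section WeightedHardy

variable {X : Type*} [MeasurableSpace X] {μ : Measure X} {p : ℝ}

theorem rpow_lintegral_le_weighted (hp : 1 < p) {f b : X → ℝ≥0∞} (hf : AEMeasurable f μ)
    (hb : AEMeasurable b μ) (hb0 : ∀ᵐ t ∂μ, b t ≠ 0) (hbtop : ∀ᵐ t ∂μ, b t ≠ ⊤) :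
    (∫⁻ t, f t ∂μ) ^ p ≤ (∫⁻ t, b t ^ (-(p - 1)⁻¹) ∂μ) ^ (p - 1) * ∫⁻ t, f t ^ p * b t ∂μ := by
  have hp0 : 0 < p := one_pos.trans hp
  have hp1 : 0 < p - 1 := sub_pos.2 hp
  have split : ∀ᵐ t ∂μ, f t = f t * b t ^ p⁻¹ * b t ^ (-p⁻¹) := by
    filter_upwards [hb0, hbtop] with t h0 htop
    rw [mul_assoc, ← ENNReal.rpow_add _ _ h0 htop, add_neg_cancel, ENNReal.rpow_zero, mul_one]
  have holder := ENNReal.lintegral_mul_le_Lp_mul_Lq μ (Real.HolderConjugate.conjExponent hp)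
    (hf.mul (hb.pow_const p⁻¹)) (hb.pow_const (-p⁻¹))
  have conj_exponent : -p⁻¹ * p.conjExponent = -(p - 1)⁻¹ := by
    rw [Real.conjExponent]; field_simp
  calc (∫⁻ t, f t ∂μ) ^ p = (∫⁻ t, f t * b t ^ p⁻¹ * b t ^ (-p⁻¹) ∂μ) ^ p := by
        rw [lintegral_congr_ae split]
    _ ≤ ((∫⁻ t, (f t * b t ^ p⁻¹) ^ p ∂μ) ^ (1 / p) *
          (∫⁻ t, (b t ^ (-p⁻¹)) ^ p.conjExponent ∂μ) ^ (1 / p.conjExponent)) ^ p :=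
        ENNReal.rpow_le_rpow holder hp0.le
    _ = (∫⁻ t, b t ^ (-(p - 1)⁻¹) ∂μ) ^ (p - 1) * ∫⁻ t, f t ^ p * b t ∂μ := by
        simp_rw [ENNReal.mul_rpow_of_nonneg _ _ hp0.le, ← ENNReal.rpow_mul, conj_exponent,
          inv_mul_cancel₀ hp0.ne', one_div_mul_cancel hp0.ne', ENNReal.rpow_one]
        rw [mul_comm, show 1 / p.conjExponent * p = p - 1 by rw [Real.conjExponent]; field_simp]

variable [LinearOrder X] [TopologicalSpace X] [OrderClosedTopology X] [OpensMeasurableSpace X]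
  {l r : X} {f a b : X → ℝ≥0∞}

/- Antitonicity lets `a x` be moved under the inner integral, where `t < x`. -/
theorem rpow_setLIntegral_Ioo_mul_le (hp : 1 < p)
    (hf : AEMeasurable f (μ.restrict (Ioo l r))) (hb : AEMeasurable b (μ.restrict (Ioo l r)))
    (hb0 : ∀ t ∈ Ioo l r, b t ≠ 0) (hbtop : ∀ t ∈ Ioo l r, b t ≠ ⊤)
    (ha : AntitoneOn a (Ioo l r)) {x : X} (hx : x ∈ Ioo l r) :
    (∫⁻ t in Ioo l x, f t ∂μ) ^ p * a x ≤
      (∫⁻ t in Ioo l r, b t ^ (-(p - 1)⁻¹) ∂μ) ^ (p - 1) *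
        ∫⁻ t in Ioo l r, f t ^ p * (a t * b t) ∂μ := by
  have hsub : Ioo l x ⊆ Ioo l r := Ioo_subset_Ioo_right hx.2.le
  have hμ : μ.restrict (Ioo l x) ≤ μ.restrict (Ioo l r) := Measure.restrict_mono hsub le_rfl
  have holder := rpow_lintegral_le_weighted hp (hf.mono_measure hμ) (hb.mono_measure hμ)
    (ae_restrict_of_forall_mem measurableSet_Ioo fun t ht => hb0 t (hsub ht))
    (ae_restrict_of_forall_mem measurableSet_Ioo fun t ht => hbtop t (hsub ht))
  have absorb : a x * ∫⁻ t in Ioo l x, f t ^ p * b t ∂μ ≤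
      ∫⁻ t in Ioo l r, f t ^ p * (a t * b t) ∂μ :=
    calc a x * ∫⁻ t in Ioo l x, f t ^ p * b t ∂μ
        ≤ ∫⁻ t in Ioo l x, a x * (f t ^ p * b t) ∂μ := lintegral_const_mul_le _ _
      _ ≤ ∫⁻ t in Ioo l x, f t ^ p * (a t * b t) ∂μ := by
          refine setLIntegral_mono' measurableSet_Ioo fun t ht => ?_
          rw [mul_left_comm]
          gcongr
          exact ha (hsub ht) hx ht.2.le
      _ ≤ ∫⁻ t in Ioo l r, f t ^ p * (a t * b t) ∂μ := lintegral_mono_set hsub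
  calc (∫⁻ t in Ioo l x, f t ∂μ) ^ p * a x
      ≤ (∫⁻ t in Ioo l x, b t ^ (-(p - 1)⁻¹) ∂μ) ^ (p - 1) *
          (∫⁻ t in Ioo l x, f t ^ p * b t ∂μ) * a x := by gcongr
    _ = (∫⁻ t in Ioo l x, b t ^ (-(p - 1)⁻¹) ∂μ) ^ (p - 1) *
          (a x * ∫⁻ t in Ioo l x, f t ^ p * b t ∂μ) := by ring
    _ ≤ _ := by gcongr

theorem setLIntegral_rpow_setLIntegral_Ioo_mul_le {ν : Measure X} {v : X → ℝ≥0∞} (hp : 1 < p)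
    (hf : AEMeasurable f (μ.restrict (Ioo l r))) (hb : AEMeasurable b (μ.restrict (Ioo l r)))
    (hb0 : ∀ t ∈ Ioo l r, b t ≠ 0) (hbtop : ∀ t ∈ Ioo l r, b t ≠ ⊤)
    (ha : AntitoneOn a (Ioo l r)) (hv : AEMeasurable v (ν.restrict (Ioo l r))) :
    ∫⁻ x in Ioo l r, (∫⁻ t in Ioo l x, f t ∂μ) ^ p * (a x * v x) ∂ν ≤
      (∫⁻ t in Ioo l r, b t ^ (-(p - 1)⁻¹) ∂μ) ^ (p - 1) *
        (∫⁻ t in Ioo l r, f t ^ p * (a t * b t) ∂μ) * ∫⁻ x in Ioo l r, v x ∂ν := by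
  rw [← lintegral_const_mul'' _ hv]
  refine setLIntegral_mono' measurableSet_Ioo fun x hx => ?_
  rw [← mul_assoc]
  exact mul_le_mul_left (rpow_setLIntegral_Ioo_mul_le hp hf hb hb0 hbtop ha hx) (v x)

end WeightedHardy

theorem rpow_setIntegral_Ioo_mul_setIntegral_le {l m r p : ℝ} (hlm : l ≤ m) (hp : 0 ≤ p)
    {f v : ℝ → ℝ} (hf : IntegrableOn f (Ioo l r)) (hv : IntegrableOn v (Ioo l r))
    (hv0 : ∀ x ∈ Ioo l r, 0 ≤ v x) :
    (∫ t in Ioo l m, |f t|) ^ p * ∫ x in Ioo m r, v x ≤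
      ∫ x in Ioo l r, (∫ t in Ioo l x, |f t|) ^ p * v x := by
  set F : ℝ → ℝ := fun x => ∫ t in Ioo l x, |f t|
  have F_nonneg (x : ℝ) : 0 ≤ F x := integral_nonneg fun t => abs_nonneg _
  have F_mono {x y : ℝ} (hxy : x ≤ y) (hyr : y ≤ r) : F x ≤ F y :=
    setIntegral_mono_set (hf.mono_set (Ioo_subset_Ioo_right hyr)).abs
      (Filter.Eventually.of_forall fun t => abs_nonneg _) (Ioo_subset_Ioo_right hxy).eventuallyLE
  have F_aemeasurable : AEMeasurable F (volume.restrict (Ioo l r)) :=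
    aemeasurable_restrict_of_monotoneOn measurableSet_Ioo fun x _ y hy hxy => F_mono hxy hy.2.le
  have hFv : IntegrableOn (fun x => F x ^ p * v x) (Ioo l r) := by
    refine hv.bdd_mul (c := F r ^ p) (F_aemeasurable.pow_const p).aestronglyMeasurable
      (ae_restrict_of_forall_mem measurableSet_Ioo fun x hx => ?_)
    rw [Real.norm_of_nonneg (Real.rpow_nonneg (F_nonneg x) p)]
    exact Real.rpow_le_rpow (F_nonneg x) (F_mono hx.2.le le_rfl) hp
  have hsub : Ioo m r ⊆ Ioo l r := Ioo_subset_Ioo_left hlm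
  calc F m ^ p * ∫ x in Ioo m r, v x = ∫ x in Ioo m r, F m ^ p * v x :=
        (integral_const_mul _ _).symm
    _ ≤ ∫ x in Ioo m r, F x ^ p * v x := by
        refine setIntegral_mono_on ((hv.mono_set hsub).const_mul _) (hFv.mono_set hsub)
          measurableSet_Ioo fun x hx => ?_
        exact mul_le_mul_of_nonneg_right
          (Real.rpow_le_rpow (F_nonneg m) (F_mono hx.1.le hx.2.le) hp) (hv0 x (hsub hx))
    _ ≤ ∫ x in Ioo l r, F x ^ p * v x := by
        refine setIntegral_mono_set hFv
          (ae_restrict_of_forall_mem measurableSet_Ioo fun x hx => ?_) hsub.eventuallyLE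
        exact mul_nonneg (Real.rpow_nonneg (F_nonneg x) p) (hv0 x hx)

section JacobiWeight

variable {α β x : ℝ}

theorem w_pos (α β : ℝ) (hx : x ∈ Ioo (-1 : ℝ) 1) : 0 < w α β x := by
  have h₁ : 0 < 1 - x := by linarith [hx.2]
  have h₂ : 0 < 1 + x := by linarith [hx.1]
  unfold w; positivity

@[fun_prop]
theorem measurable_w (α β : ℝ) : Measurable (w α β) := by
  unfold w; fun_prop

theorem w_neg (α β x : ℝ) : w α β (-x) = w β α x := by
  simp only [w, sub_neg_eq_add, ← sub_eq_add_neg, mul_comm]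

theorem w_mul_w (α β γ δ : ℝ) (hx : x ∈ Ioo (-1 : ℝ) 1) :
    w α β x * w γ δ x = w (α + γ) (β + δ) x := by
  have h₁ : 0 < 1 - x := by linarith [hx.2]
  have h₂ : 0 < 1 + x := by linarith [hx.1]
  simp only [w, Real.rpow_add h₁, Real.rpow_add h₂]
  ring

theorem w_rpow (α β s : ℝ) (hx : x ∈ Ioo (-1 : ℝ) 1) : w α β x ^ s = w (α * s) (β * s) x := by
  have h₁ : 0 < 1 - x := by linarith [hx.2]
  have h₂ : 0 < 1 + x := by linarith [hx.1]
  simp only [w]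
  rw [Real.mul_rpow (by positivity) (by positivity), Real.rpow_mul h₁.le, Real.rpow_mul h₂.le]

theorem w_zero_right_le (hα : 0 ≤ α) (hx : x ∈ Ioo (-1 : ℝ) 1) : w α 0 x ≤ 2 ^ α := by
  rw [w, Real.rpow_zero, mul_one]
  exact Real.rpow_le_rpow (by linarith [hx.2]) (by linarith [hx.1]) hα

theorem w_max_min_mul_w_le (hx : x ∈ Ioo (-1 : ℝ) 1) :
    w (max α 0) (min β 0) x * w 0 (max β 0) x ≤ 2 ^ (-min α 0) * w α β x :=
  calc w (max α 0) (min β 0) x * w 0 (max β 0) x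
      = w (-min α 0) 0 x * w α β x := by
        rw [w_mul_w _ _ _ _ hx, w_mul_w _ _ _ _ hx, min_add_max, add_zero, add_zero, zero_add,
          neg_add_eq_sub, eq_sub_of_add_eq (max_add_min α 0), add_zero]
    _ ≤ 2 ^ (-min α 0) * w α β x :=
        mul_le_mul_of_nonneg_right (w_zero_right_le (neg_nonneg.2 (min_le_right α 0)) hx)
          (w_pos α β hx).le

theorem antitoneOn_w (hα : 0 ≤ α) (hβ : β ≤ 0) : AntitoneOn (w α β) (Ioo (-1 : ℝ) 1) := by
  intro x hx y hy hxy
  have h₁ : 0 < 1 - y := by linarith [hy.2]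
  have h₂ : 0 < 1 + x := by linarith [hx.1]
  exact mul_le_mul (Real.rpow_le_rpow h₁.le (by linarith) hα)
    (Real.rpow_le_rpow_of_nonpos h₂ (by linarith) hβ) (Real.rpow_nonneg (by linarith) β)
    (Real.rpow_nonneg (by linarith) α)

theorem intervalIntegrable_w_left (α : ℝ) (hβ : -1 < β) :
    IntervalIntegrable (w α β) volume (-1) 0 := by
  refine IntervalIntegrable.continuousOn_mul ?_ ?_
  · simpa using (intervalIntegral.intervalIntegrable_rpow' (a := 0) (b := 1) hβ).comp_add_left 1
  · rw [uIcc_of_le (by norm_num)]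
    refine ContinuousOn.rpow_const (by fun_prop) fun x hx => Or.inl ?_
    linarith [hx.2]

theorem integrableOn_w (hα : -1 < α) (hβ : -1 < β) : IntegrableOn (w α β) (Ioo (-1 : ℝ) 1) := by
  have right : IntervalIntegrable (w α β) volume 0 1 := by
    rw [IntervalIntegrable.iff_comp_neg]
    simpa only [w_neg, neg_zero] using (intervalIntegrable_w_left β hα).symm
  exact (intervalIntegrable_iff_integrableOn_Ioo_of_le (by norm_num)).1
    ((intervalIntegrable_w_left α hβ).trans right)

theorem setLIntegral_w_ne_top (hα : -1 < α) (hβ : -1 < β) :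
    ∫⁻ x in Ioo (-1 : ℝ) 1, ENNReal.ofReal (w α β x) ≠ ⊤ :=
  (integrableOn_w hα hβ).lintegral_lt_top.ne

theorem setLIntegral_w_rpow_ne_top {s : ℝ} (hα : -1 < α * s) (hβ : -1 < β * s) :
    ∫⁻ x in Ioo (-1 : ℝ) 1, ENNReal.ofReal (w α β x) ^ s ≠ ⊤ := by
  have eq : EqOn (fun x => ENNReal.ofReal (w α β x) ^ s)
      (fun x => ENNReal.ofReal (w (α * s) (β * s) x)) (Ioo (-1) 1) := fun x hx => by
    simp only [ENNReal.ofReal_rpow_of_pos (w_pos α β hx), w_rpow α β s hx]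
  rw [setLIntegral_congr_fun measurableSet_Ioo eq]
  exact setLIntegral_w_ne_top hα hβ

theorem setIntegral_w_pos (hα : -1 < α) (hβ : -1 < β) : 0 < ∫ x in Ioo (0 : ℝ) 1, w α β x := by
  have hsub : Ioo (0 : ℝ) 1 ⊆ Ioo (-1 : ℝ) 1 := Ioo_subset_Ioo_left (by norm_num)
  rw [← integral_Ioc_eq_integral_Ioo, ← intervalIntegral.integral_of_le zero_le_one]
  exact intervalIntegral.intervalIntegral_pos_of_pos_on
    ((intervalIntegrable_iff_integrableOn_Ioo_of_le zero_le_one).2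
      ((integrableOn_w hα hβ).mono_set hsub))
    (fun x hx => w_pos α β (hsub hx)) one_pos

end JacobiWeight

section HardyInequality

variable {α β p C : ℝ}

/-- The weighted Hardy inequality on `L^p(w_{α,β})`, stated for `p`-th powers of the norms. -/
def HardyInequality (α β p C : ℝ) : Prop :=
  ∀ f : ℝ → ℝ, Measurable f →
    IntegrableOn (fun x => |f x| ^ p * w α β x) (Ioo (-1 : ℝ) 1) →
    ∫ x in Ioo (-1 : ℝ) 1, (∫ t in Ioo (-1 : ℝ) x, |f t|) ^ p * w α β x ≤
      C * ∫ x in Ioo (-1 : ℝ) 1, |f x| ^ p * w α β x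

theorem rpow_one_div_le_mul_iff {a b c : ℝ} (hp : 0 < p) (ha : 0 ≤ a) (hb : 0 ≤ b) (hc : 0 ≤ c) :
    a ^ (1 / p) ≤ c * b ^ (1 / p) ↔ a ≤ c ^ p * b := by
  have hbp : 0 ≤ b ^ (1 / p) := Real.rpow_nonneg hb _
  rw [one_div] at hbp ⊢
  rw [Real.rpow_inv_le_iff_of_pos ha (mul_nonneg hc hbp) hp, Real.mul_rpow hc hbp,
    Real.rpow_inv_rpow hb hp.ne']

theorem setIntegral_rpow_mul_w_nonneg {f : ℝ → ℝ} (hf : ∀ x, 0 ≤ f x) :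
    0 ≤ ∫ x in Ioo (-1 : ℝ) 1, f x ^ p * w α β x :=
  setIntegral_nonneg measurableSet_Ioo fun x hx =>
    mul_nonneg (Real.rpow_nonneg (hf x) p) (w_pos α β hx).le

theorem hardyInequality_rpow_iff (hp : 0 < p) {c : ℝ} (hc : 0 ≤ c) :
    HardyInequality α β p (c ^ p) ↔ ∀ f : ℝ → ℝ, Measurable f →
      IntegrableOn (fun x => |f x| ^ p * w α β x) (Ioo (-1 : ℝ) 1) →
      (∫ x in Ioo (-1 : ℝ) 1, (∫ t in Ioo (-1 : ℝ) x, |f t|) ^ p * w α β x) ^ (1 / p)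
        ≤ c * (∫ x in Ioo (-1 : ℝ) 1, |f x| ^ p * w α β x) ^ (1 / p) := by
  refine forall₃_congr fun f _ _ => (rpow_one_div_le_mul_iff hp ?_ ?_ hc).symm
  · exact setIntegral_rpow_mul_w_nonneg fun x => integral_nonneg fun t => abs_nonneg _
  · exact setIntegral_rpow_mul_w_nonneg fun x => abs_nonneg _

theorem setLIntegral_rpow_setLIntegral_mul_w_le (hp : 1 < p) {f : ℝ → ℝ≥0∞} (hf : Measurable f) :
    ∫⁻ x in Ioo (-1 : ℝ) 1, (∫⁻ t in Ioo (-1 : ℝ) x, f t) ^ p * ENNReal.ofReal (w α β x) ≤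
      (∫⁻ x in Ioo (-1 : ℝ) 1, ENNReal.ofReal (w 0 (max β 0) x) ^ (-(p - 1)⁻¹)) ^ (p - 1) *
        ENNReal.ofReal (2 ^ (-min α 0)) *
        (∫⁻ x in Ioo (-1 : ℝ) 1, ENNReal.ofReal (w (min α 0) (max β 0) x)) *
        ∫⁻ x in Ioo (-1 : ℝ) 1, f x ^ p * ENNReal.ofReal (w α β x) := by
  -- `w α β = a * v` with `a` antitone and `v` integrable, while `a * b ≤ M * w α β`.
  set a : ℝ → ℝ≥0∞ := fun x => ENNReal.ofReal (w (max α 0) (min β 0) x)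
  set v : ℝ → ℝ≥0∞ := fun x => ENNReal.ofReal (w (min α 0) (max β 0) x)
  set b : ℝ → ℝ≥0∞ := fun x => ENNReal.ofReal (w 0 (max β 0) x)
  set B := (∫⁻ x in Ioo (-1 : ℝ) 1, b x ^ (-(p - 1)⁻¹)) ^ (p - 1)
  set M : ℝ≥0∞ := ENNReal.ofReal (2 ^ (-min α 0))
  set V := ∫⁻ x in Ioo (-1 : ℝ) 1, v x
  have a_antitone : AntitoneOn a (Ioo (-1) 1) := fun x hx y hy hxy =>
    ENNReal.ofReal_le_ofReal (antitoneOn_w (le_max_right α 0) (min_le_right β 0) hx hy hxy)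
  have a_mul_v {x : ℝ} (hx : x ∈ Ioo (-1 : ℝ) 1) : a x * v x = ENNReal.ofReal (w α β x) := by
    rw [← ENNReal.ofReal_mul (w_pos _ _ hx).le, w_mul_w _ _ _ _ hx, max_add_min, min_add_max,
      add_zero, add_zero]
  have a_mul_b_le {x : ℝ} (hx : x ∈ Ioo (-1 : ℝ) 1) :
      a x * b x ≤ M * ENNReal.ofReal (w α β x) := by
    rw [← ENNReal.ofReal_mul (w_pos _ _ hx).le, ← ENNReal.ofReal_mul (by positivity)]
    exact ENNReal.ofReal_le_ofReal (w_max_min_mul_w_le hx)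
  calc ∫⁻ x in Ioo (-1 : ℝ) 1, (∫⁻ t in Ioo (-1 : ℝ) x, f t) ^ p * ENNReal.ofReal (w α β x)
      = ∫⁻ x in Ioo (-1 : ℝ) 1, (∫⁻ t in Ioo (-1 : ℝ) x, f t) ^ p * (a x * v x) :=
        setLIntegral_congr_fun measurableSet_Ioo fun x hx => by simp only [a_mul_v hx]
    _ ≤ B * (∫⁻ t in Ioo (-1 : ℝ) 1, f t ^ p * (a t * b t)) * V :=
        setLIntegral_rpow_setLIntegral_Ioo_mul_le hp hf.aemeasurable (by fun_prop)
          (fun t ht => (ENNReal.ofReal_pos.2 (w_pos _ _ ht)).ne') (fun t _ => ENNReal.ofReal_ne_top)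
          a_antitone (by fun_prop)
    _ ≤ B * (∫⁻ t in Ioo (-1 : ℝ) 1, f t ^ p * (M * ENNReal.ofReal (w α β t))) * V := by
        gcongr B * ?_ * V
        exact setLIntegral_mono' measurableSet_Ioo fun t ht => mul_le_mul_right (a_mul_b_le ht) _
    _ = B * M * V * ∫⁻ t in Ioo (-1 : ℝ) 1, f t ^ p * ENNReal.ofReal (w α β t) := by
        simp_rw [mul_left_comm _ M]
        rw [lintegral_const_mul' _ _ ENNReal.ofReal_ne_top]
        ring

theorem exists_setLIntegral_rpow_setLIntegral_mul_w_le (hα : -1 < α) (hp : 1 < p)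
    (hβ : β < p - 1) :
    ∃ C : ℝ≥0, ∀ f : ℝ → ℝ≥0∞, Measurable f →
      ∫⁻ x in Ioo (-1 : ℝ) 1, (∫⁻ t in Ioo (-1 : ℝ) x, f t) ^ p * ENNReal.ofReal (w α β x) ≤
        C * ∫⁻ x in Ioo (-1 : ℝ) 1, f x ^ p * ENNReal.ofReal (w α β x) := by
  have hp1 : 0 < p - 1 := sub_pos.2 hp
  have C_ne_top :
      (∫⁻ x in Ioo (-1 : ℝ) 1, ENNReal.ofReal (w 0 (max β 0) x) ^ (-(p - 1)⁻¹)) ^ (p - 1) *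
        ENNReal.ofReal (2 ^ (-min α 0)) *
        ∫⁻ x in Ioo (-1 : ℝ) 1, ENNReal.ofReal (w (min α 0) (max β 0) x) ≠ ⊤ := by
    refine ENNReal.mul_ne_top (ENNReal.mul_ne_top ?_ ENNReal.ofReal_ne_top) ?_
    · refine ENNReal.rpow_ne_top_of_nonneg hp1.le (setLIntegral_w_rpow_ne_top (by norm_num) ?_)
      rw [mul_neg, neg_lt_neg_iff, ← div_eq_mul_inv, div_lt_one hp1]
      exact max_lt hβ hp1
    · exact setLIntegral_w_ne_top (lt_min hα (by norm_num)) (lt_max_of_lt_right (by norm_num))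
  exact ⟨_, fun f hf => (setLIntegral_rpow_setLIntegral_mul_w_le hp hf).trans_eq
    (congrArg (· * _) (ENNReal.coe_toNNReal C_ne_top).symm)⟩

theorem enorm_setIntegral_rpow_mul_w (hp : 0 ≤ p) {f : ℝ → ℝ}
    (hf : IntegrableOn (fun x => |f x| ^ p * w α β x) (Ioo (-1 : ℝ) 1)) :
    ‖∫ x in Ioo (-1 : ℝ) 1, |f x| ^ p * w α β x‖ₑ =
      ∫⁻ x in Ioo (-1 : ℝ) 1, ‖f x‖ₑ ^ p * ENNReal.ofReal (w α β x) := by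
  have nonneg : ∀ x ∈ Ioo (-1 : ℝ) 1, 0 ≤ |f x| ^ p * w α β x := fun x hx =>
    mul_nonneg (Real.rpow_nonneg (abs_nonneg _) p) (w_pos α β hx).le
  rw [Real.enorm_of_nonneg (setIntegral_rpow_mul_w_nonneg fun x => abs_nonneg _),
    ofReal_integral_eq_lintegral_ofReal hf (ae_restrict_of_forall_mem measurableSet_Ioo nonneg)]
  refine setLIntegral_congr_fun measurableSet_Ioo fun x _ => ?_
  simp only [ENNReal.ofReal_mul (Real.rpow_nonneg (abs_nonneg (f x)) p),
    ← ENNReal.ofReal_rpow_of_nonneg (abs_nonneg (f x)) hp, Real.enorm_eq_ofReal_abs]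

theorem enorm_setIntegral_rpow_setIntegral_mul_w_le (hp : 0 ≤ p) (f : ℝ → ℝ) :
    ‖∫ x in Ioo (-1 : ℝ) 1, (∫ t in Ioo (-1 : ℝ) x, |f t|) ^ p * w α β x‖ₑ ≤
      ∫⁻ x in Ioo (-1 : ℝ) 1,
        (∫⁻ t in Ioo (-1 : ℝ) x, ‖f t‖ₑ) ^ p * ENNReal.ofReal (w α β x) := by
  refine (enorm_integral_le_lintegral_enorm _).trans
    (setLIntegral_mono' measurableSet_Ioo fun x hx => ?_)
  rw [enorm_mul, Real.enorm_rpow_of_nonneg (integral_nonneg fun t => abs_nonneg _) hp,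
    Real.enorm_of_nonneg (w_pos α β hx).le]
  gcongr
  exact (enorm_integral_le_lintegral_enorm _).trans_eq (by simp only [Real.enorm_abs])

theorem exists_hardyInequality (hα : -1 < α) (hp : 1 < p) (hβ : β < p - 1) :
    ∃ C, 0 < C ∧ HardyInequality α β p C := by
  have hp0 : 0 ≤ p := by linarith
  obtain ⟨C, hardy⟩ := exists_setLIntegral_rpow_setLIntegral_mul_w_le hα hp hβ
  refine ⟨C + 1, by positivity, fun f hf hint => ?_⟩
  set N := ∫ x in Ioo (-1 : ℝ) 1, |f x| ^ p * w α β x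
  have hN : 0 ≤ N := setIntegral_rpow_mul_w_nonneg fun x => abs_nonneg _
  set I := ∫ x in Ioo (-1 : ℝ) 1, (∫ t in Ioo (-1 : ℝ) x, |f t|) ^ p * w α β x
  have enorm_le : ‖I‖ₑ ≤ ‖(C : ℝ) * N‖ₑ := by
    rw [enorm_mul, enorm_setIntegral_rpow_mul_w hp0 hint, Real.enorm_of_nonneg C.coe_nonneg,
      ENNReal.ofReal_coe_nnreal]
    exact (enorm_setIntegral_rpow_setIntegral_mul_w_le hp0 f).trans (hardy _ hf.enorm)
  rw [enorm_le_iff_norm_le, Real.norm_of_nonneg (mul_nonneg C.coe_nonneg hN)] at enorm_le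
  linarith [Real.le_norm_self I]

/-- The critical function `(1 + t)⁻¹` cut off to `(-1 + ε, 0)`, which tests the necessity of
`β < p - 1` as `ε → 0`. Without the cut-off its primitive is infinite, and the Bochner integral
of `|f|` in `HardyInequality` would be `0`. -/
def truncInv (ε : ℝ) : ℝ → ℝ :=
  (Ioo (-1 + ε) 0).indicator fun t => (1 + t)⁻¹

variable {ε : ℝ}

theorem truncInv_nonneg (hε : 0 ≤ ε) (t : ℝ) : 0 ≤ truncInv ε t :=
  indicator_nonneg (fun t ht => inv_nonneg.2 (by linarith [ht.1])) t

theorem measurable_truncInv (ε : ℝ) : Measurable (truncInv ε) :=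
  Measurable.indicator (by fun_prop) measurableSet_Ioo

theorem integrable_truncInv (hε : 0 < ε) : Integrable (truncInv ε) := by
  refine IntegrableOn.integrable_indicator ?_ measurableSet_Ioo
  have hcont : ContinuousOn (fun t : ℝ => (1 + t)⁻¹) (Icc (-1 + ε) 0) :=
    ContinuousOn.inv₀ (by fun_prop) fun t ht => by linarith [ht.1]
  exact hcont.integrableOn_Icc.mono_set Ioo_subset_Icc_self

theorem setIntegral_truncInv (hε : 0 < ε) (hε1 : ε ≤ 1) {x : ℝ} (hx : 0 ≤ x) :
    ∫ t in Ioo (-1 : ℝ) x, truncInv ε t = Real.log ε⁻¹ := by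
  have hsub : Ioo (-1 + ε) 0 ⊆ Ioo (-1 : ℝ) x := Ioo_subset_Ioo (by linarith) hx
  rw [truncInv, setIntegral_indicator measurableSet_Ioo, inter_eq_self_of_subset_right hsub,
    ← integral_Ioc_eq_integral_Ioo, ← intervalIntegral.integral_of_le (by linarith),
    intervalIntegral.integral_comp_add_left (fun t => t⁻¹) 1,
    integral_inv_of_pos (by linarith) (by norm_num)]
  simp

theorem truncInv_rpow_mul_w_le (hp : p ≠ 0) (hβ : p - 1 ≤ β) (hε : 0 ≤ ε) (t : ℝ) :
    truncInv ε t ^ p * w α β t ≤ 2 ^ |α| * truncInv ε t := by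
  by_cases ht : t ∈ Ioo (-1 + ε) 0
  · have h₀ : 0 < 1 + t := by linarith [ht.1]
    have hα : (1 - t) ^ α ≤ 2 ^ |α| :=
      (Real.rpow_le_rpow_of_exponent_le (by linarith [ht.2]) (le_abs_self α)).trans
        (Real.rpow_le_rpow (by linarith [ht.2]) (by linarith [ht.1]) (abs_nonneg α))
    have hβ : (1 + t)⁻¹ ^ p * (1 + t) ^ β ≤ (1 + t)⁻¹ := by
      rw [Real.inv_rpow h₀.le, ← Real.rpow_neg h₀.le, ← Real.rpow_add h₀, ← Real.rpow_neg_one]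
      exact Real.rpow_le_rpow_of_exponent_ge h₀ (by linarith [ht.2]) (by linarith)
    rw [truncInv, indicator_of_mem ht, w, mul_left_comm]
    exact mul_le_mul hα hβ (by positivity) (by positivity)
  · rw [truncInv, indicator_of_notMem ht, Real.zero_rpow hp, zero_mul, mul_zero]

theorem integrableOn_truncInv_rpow_mul_w (hp : p ≠ 0) (hβ : p - 1 ≤ β) (hε : 0 < ε) :
    IntegrableOn (fun t => truncInv ε t ^ p * w α β t) (Ioo (-1 : ℝ) 1) := by
  refine ((integrable_truncInv hε).integrableOn.const_mul (2 ^ |α|)).mono'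
    (((measurable_truncInv ε).pow_const p).mul (measurable_w α β)).aestronglyMeasurable
    (ae_restrict_of_forall_mem measurableSet_Ioo fun t ht => ?_)
  rw [Real.norm_of_nonneg
    (mul_nonneg (Real.rpow_nonneg (truncInv_nonneg hε.le t) p) (w_pos α β ht).le)]
  exact truncInv_rpow_mul_w_le hp hβ hε.le t

theorem setIntegral_truncInv_rpow_mul_w_le (hp : p ≠ 0) (hβ : p - 1 ≤ β) (hε : 0 < ε)
    (hε1 : ε ≤ 1) :
    ∫ t in Ioo (-1 : ℝ) 1, truncInv ε t ^ p * w α β t ≤ 2 ^ |α| * Real.log ε⁻¹ := by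
  rw [← setIntegral_truncInv hε hε1 zero_le_one, ← integral_const_mul]
  exact setIntegral_mono (integrableOn_truncInv_rpow_mul_w hp hβ hε)
    ((integrable_truncInv hε).integrableOn.const_mul _) (truncInv_rpow_mul_w_le hp hβ hε.le)

theorem HardyInequality.log_rpow_mul_le (h : HardyInequality α β p C) (hC : 0 ≤ C) (hα : -1 < α)
    (hp : 0 < p) (hβ : p - 1 ≤ β) (hε : 0 < ε) (hε1 : ε ≤ 1) :
    Real.log ε⁻¹ ^ p * ∫ x in Ioo (0 : ℝ) 1, w α β x ≤ C * (2 ^ |α| * Real.log ε⁻¹) := by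
  have abs_truncInv (t : ℝ) : |truncInv ε t| = truncInv ε t :=
    abs_of_nonneg (truncInv_nonneg hε.le t)
  have lower := rpow_setIntegral_Ioo_mul_setIntegral_le (p := p) (by norm_num : (-1 : ℝ) ≤ 0)
    hp.le (integrable_truncInv hε).integrableOn
    (integrableOn_w hα (by linarith)) fun x hx => (w_pos α β hx).le
  have upper := h (truncInv ε) (measurable_truncInv ε)
  simp only [abs_truncInv, setIntegral_truncInv hε hε1 le_rfl] at lower upper
  calc Real.log ε⁻¹ ^ p * ∫ x in Ioo (0 : ℝ) 1, w α β x
      ≤ C * ∫ x in Ioo (-1 : ℝ) 1, truncInv ε x ^ p * w α β x :=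
        lower.trans (upper (integrableOn_truncInv_rpow_mul_w hp.ne' hβ hε))
    _ ≤ C * (2 ^ |α| * Real.log ε⁻¹) :=
        mul_le_mul_of_nonneg_left (setIntegral_truncInv_rpow_mul_w_le hp.ne' hβ hε hε1) hC

theorem HardyInequality.lt_sub_one (h : HardyInequality α β p C) (hC : 0 ≤ C) (hα : -1 < α)
    (hp : 1 < p) : β < p - 1 := by
  by_contra! hβ
  set K := ∫ x in Ioo (0 : ℝ) 1, w α β x
  have hK : 0 < K := setIntegral_w_pos hα (by linarith)
  have growth : Filter.Tendsto (fun L : ℝ => L ^ (p - 1) * K) Filter.atTop Filter.atTop :=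
    (_root_.tendsto_rpow_atTop (sub_pos.2 hp)).atTop_mul_const hK
  obtain ⟨L, hL_large, hL⟩ :=
    ((growth.eventually_gt_atTop (C * 2 ^ |α|)).and (Filter.eventually_gt_atTop 0)).exists
  have bound := h.log_rpow_mul_le hC hα (by linarith) hβ (Real.exp_pos (-L))
    (Real.exp_le_one_iff.2 (by linarith))
  rw [← Real.exp_neg, neg_neg, Real.log_exp] at bound
  refine hL_large.not_ge (le_of_mul_le_mul_right ?_ hL)
  calc L ^ (p - 1) * K * L = L ^ p * K := by
        rw [Real.rpow_sub_one hL.ne']; field_simp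
    _ ≤ C * 2 ^ |α| * L := by linarith

end HardyInequality

theorem statement14_general (α β : ℝ) (hα : -1 < α) (p : ℝ) (hp : 1 < p) :
    (∃ c : ℝ, 0 < c ∧ ∀ f : ℝ → ℝ, Measurable f →
        IntegrableOn (fun x => |f x| ^ p * w α β x) (Ioo (-1 : ℝ) 1) →
        (∫ x in Ioo (-1 : ℝ) 1, (∫ t in Ioo (-1 : ℝ) x, |f t|) ^ p * w α β x) ^ (1 / p)
          ≤ c * (∫ x in Ioo (-1 : ℝ) 1, |f x| ^ p * w α β x) ^ (1 / p))
      ↔ β < p - 1 := by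
  have hp0 : 0 < p := one_pos.trans hp
  constructor
  · rintro ⟨c, hc, hardy⟩
    exact ((hardyInequality_rpow_iff hp0 hc.le).2 hardy).lt_sub_one
      (Real.rpow_nonneg hc.le p) hα hp
  · intro hβ
    obtain ⟨C, hC, hardy⟩ := exists_hardyInequality hα hp hβ
    rw [← Real.rpow_inv_rpow hC.le hp0.ne'] at hardy
    exact ⟨C ^ p⁻¹, Real.rpow_pos_of_pos hC _,
      (hardyInequality_rpow_iff hp0 (Real.rpow_nonneg hC.le _)).1 hardy⟩

theorem statement14 (α β : ℝ) (hα : -1 < α) (hβ : -1 < β) (p : ℝ) (hp : 1 < p) :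
    (∃ c : ℝ, 0 < c ∧ ∀ f : ℝ → ℝ, Measurable f →
        IntegrableOn (fun x => |f x| ^ p * w α β x) (Ioo (-1 : ℝ) 1) →
        (∫ x in Ioo (-1 : ℝ) 1, (∫ t in Ioo (-1 : ℝ) x, |f t|) ^ p * w α β x) ^ (1 / p)
          ≤ c * (∫ x in Ioo (-1 : ℝ) 1, |f x| ^ p * w α β x) ^ (1 / p))
      ↔ β < p - 1 :=
  statement14_general α β hα p hp

end JacobiApprox
end
end
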